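/- arXiv:math/0112002 — 2 statements merged into one kernel-verified Lean document; each statement's English description precedes it below -/
import Mathlib

section
/- There exist absolute positive constants C₁, C₂, C₃ such that the following holds. Let d ≥ 2, s = d(d+3), N ≤ 1/(40π√d), and let π : ℝ^s → ℝ⁴ be the projection sending a coefficient vector v to the coefficients (a₁₀, a₀₁, b₁₀, b₀₁) of the linear parts of F and G. Let V ⊂ E(s,N) be a convex set whose image π(V) has positive 4-dimensional Lebesgue measure, and let δ ≥ 1 satisfy |E(4,N)| / |π(V)| ≤ δ, where |E(4,N)| and |π(V)| denote 4-dimensional Lebesgue measures. Then for every T ≥ 0, |{v ∈ V : C(v) ≥ T}| ≤ C₁ δ d^{C₂} e^{−C₃ T} · |V|, where |·| for subsets of V denotes Lebesgue measure in the real affine hull of V (i.e., k-dimensional Hausdorff measure, k being the real dimension of V). -/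
/-!
In polar coordinates `x = r cos θ`, `y = r sin θ` the system reads `r' = r P(θ, r)`,
`θ' = 1 + Q(θ, r)`, where `P` and `Q` are polynomials in `r` whose coefficients are trigonometric in
`θ`. By Cauchy-Schwarz `|P|, |Q| ≤ N √d` for complex `|r| ≤ 1`, which is at most `1 / (40π)`. Hence
`θ` is a good time, and the radial equation `u' = u S(θ, u)` with `S = P / (1 + Q)` has a holomorphic
return map on `|r| < 4/5`. Its relative displacement `D(r) = u(2π) / r - 1` extends holomorphically
to `r = 0`, with `|D| ≤ 8π N √d` (`RadialField.exists_displacement`).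

A periodic orbit in the disc avoids the equilibrium at the origin and turns around it; it closes up
after one turn (`RadialField.closes_up`), so it meets the positive `x`-axis at a zero of `D` in
`(0, 1/2]`. By uniqueness of solutions distinct orbits give distinct zeros. With `n` orbits, a
Jensen inequality (`norm_le_of_zeros`) gives `|D(0)| ≤ 8π N √d (2/3)^n`. At the centre,
`D(0) = exp (∫ S(θ, 0)) - 1` is bounded below by the trace `a₁₀ + b₀₁` (`abs_trace_le`). Therefore
`C(v) ≥ T` forces `v` into the slab `|a₁₀ + b₀₁| ≤ ε` with `ε = 8π N √d (2/3)^T`. The isolation of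
limit cycles plays no role.

Finally, slabs occupy a small part of a convex set (`slab_measure_le`): if the `k`-dimensional convex
set `V` contains a point where the linear form is at least `c`, the slab of half-width `ε` has
proportion at most `12 (k + 1) ε / c`. Applied to the ball of `ℝ⁴`, this and the hypothesis on `π(V)`
show that one may take `c = N / (240 δ)` (`exists_large_trace`); applied to `V` with its Hausdorff
measure, it gives the theorem, as `k + 1 ≤ 5 d²`.
-/

open MeasureTheory Metric
open scoped ENNReal NNReal Real

/-- Index set of coefficients: pairs `(i,k)` of nonnegative integers with `1 ≤ i+k ≤ d`. -/
def coeffIdx (d : ℕ) : Finset (ℕ × ℕ) :=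
  (Finset.range (d + 1) ×ˢ Finset.range (d + 1)).filter
    fun p => 1 ≤ p.1 + p.2 ∧ p.1 + p.2 ≤ d

/-- The space `ℝ^s`, `s = d(d+3)`, of real coefficients `(a_{ki}, b_{ki})` of the pair of
polynomials `F, G` (the `inl` part indexes the `a`'s, the `inr` part the `b`'s). -/
abbrev CoefSpace (d : ℕ) := EuclideanSpace ℝ (↥(coeffIdx d) ⊕ ↥(coeffIdx d))

/-- `F(x,y) = Σ_{1 ≤ i+k ≤ d} a_{ki} x^k y^i`, where the index pair is `p = (i,k)`. -/
noncomputable def Fpoly (d : ℕ) (v : CoefSpace d) (x y : ℝ) : ℝ :=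
  ∑ p : ↥(coeffIdx d), v (Sum.inl p) * x ^ (p : ℕ × ℕ).2 * y ^ (p : ℕ × ℕ).1

/-- `G(x,y) = Σ_{1 ≤ i+k ≤ d} b_{ki} x^k y^i`. -/
noncomputable def Gpoly (d : ℕ) (v : CoefSpace d) (x y : ℝ) : ℝ :=
  ∑ p : ↥(coeffIdx d), v (Sum.inr p) * x ^ (p : ℕ × ℕ).2 * y ^ (p : ℕ × ℕ).1

/-- The planar vector field `ẋ = -y + F(x,y)`, `ẏ = x + G(x,y)`. -/
noncomputable def vecField (d : ℕ) (v : CoefSpace d) (q : ℝ × ℝ) : ℝ × ℝ :=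
  (-q.2 + Fpoly d v q.1 q.2, q.1 + Gpoly d v q.1 q.2)

/-- `Γ` is a (nonconstant) periodic orbit of the vector field `X`: the image of a
nonconstant periodic solution of `ẋ = X(x)`. -/
def IsPeriodicOrbit (X : ℝ × ℝ → ℝ × ℝ) (Γ : Set (ℝ × ℝ)) : Prop :=
  ∃ (sol : ℝ → ℝ × ℝ) (T : ℝ), 0 < T ∧
    (∀ t, HasDerivAt sol (X (sol t)) t) ∧
    (∀ t, sol (t + T) = sol t) ∧
    (∃ t₁ t₂, sol t₁ ≠ sol t₂) ∧
    Γ = Set.range sol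

/-- `Γ` is a limit cycle of `X`: a periodic orbit admitting an open neighbourhood that
meets no other periodic orbit. -/
def IsLimitCycle (X : ℝ × ℝ → ℝ × ℝ) (Γ : Set (ℝ × ℝ)) : Prop :=
  IsPeriodicOrbit X Γ ∧
    ∃ U : Set (ℝ × ℝ), IsOpen U ∧ Γ ⊆ U ∧
      ∀ Γ' : Set (ℝ × ℝ), IsPeriodicOrbit X Γ' → Γ' ≠ Γ → Γ' ∩ U = ∅

/-- `C(v)`: the number of limit cycles of the vector field with coefficient vector `v`
contained in the closed disk `D_{1/2} = {x² + y² ≤ 1/4}` (valued in `ℝ≥0∞`). -/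
noncomputable def limitCycleCount (d : ℕ) (v : CoefSpace d) : ℝ≥0∞ :=
  (({Γ : Set (ℝ × ℝ) | IsLimitCycle (vecField d v) Γ ∧
      Γ ⊆ {q : ℝ × ℝ | q.1 ^ 2 + q.2 ^ 2 ≤ 1 / 4}}).encard : ℕ∞)


/-- The natural projection `π : ℝ^s → ℝ⁴` sending a coefficient vector `v` to the
coefficients `(a₁₀, a₀₁, b₁₀, b₀₁)` of the linear parts of `F` and `G`. -/
noncomputable def proj (d : ℕ) (v : CoefSpace d) : EuclideanSpace ℝ (Fin 4) :=
  if h : 1 ≤ d then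
    (WithLp.equiv 2 (Fin 4 → ℝ)).symm
      ![v (Sum.inl ⟨(0, 1), by simp [coeffIdx]; omega⟩),
        v (Sum.inl ⟨(1, 0), by simp [coeffIdx]; omega⟩),
        v (Sum.inr ⟨(0, 1), by simp [coeffIdx]; omega⟩),
        v (Sum.inr ⟨(1, 0), by simp [coeffIdx]; omega⟩)]
  else 0

open Filter Topology

/-! ### Complexified radial equations -/

/-- Solutions of a scalar linear equation `f' = H f` on `[0, L]` are exponentials. -/
lemma linear_ode_formula {L : ℝ} (hL : 0 ≤ L) {f H : ℝ → ℂ} (hH : ContinuousOn H (Set.Icc 0 L))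
    (hf : ∀ t ∈ Set.Icc 0 L, HasDerivWithinAt f (H t * f t) (Set.Icc 0 L) t) :
    ∀ t ∈ Set.Icc 0 L, f t = f 0 * Complex.exp (∫ s in (0 : ℝ)..t, H s) := by
  set G : ℝ → ℂ := Set.IccExtend hL ((Set.Icc 0 L).domRestrict H) with hG
  have hGc : Continuous G := (continuousOn_iff_continuous_domRestrict.1 hH).Icc_extend'
  have hGe : ∀ t ∈ Set.Icc 0 L, G t = H t := fun t ht => by
    rw [hG, Set.IccExtend_of_mem _ _ ht]; rfl
  have hI : ∀ t, HasDerivAt (fun t => ∫ s in (0 : ℝ)..t, G s) (G t) t := fun t =>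
    intervalIntegral.integral_hasDerivAt_right (hGc.intervalIntegrable _ _)
      (hGc.stronglyMeasurableAtFilter _ _) hGc.continuousAt
  have hd : ∀ t ∈ Set.Icc 0 L, HasDerivWithinAt
      (fun t => f t * Complex.exp (-∫ s in (0 : ℝ)..t, G s)) 0 (Set.Icc 0 L) t := fun t ht => by
    have h1 := (hf t ht).mul ((hI t).neg.cexp.hasDerivWithinAt (s := Set.Icc 0 L))
    refine h1.congr_deriv ?_
    rw [hGe t ht]; simp only [Pi.neg_apply]; ring
  have hconst := constant_of_has_deriv_right_zero
    (fun t ht => (hd t ht).continuousWithinAt) (fun t ht =>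
      ((hd t (Set.Ico_subset_Icc_self ht)).mono_of_mem_nhdsWithin (Icc_mem_nhdsGE_of_mem ht)))
  intro t ht
  have h2 := hconst t ht
  have h3 : ∫ s in (0 : ℝ)..t, H s = ∫ s in (0 : ℝ)..t, G s :=
    intervalIntegral.integral_congr fun s hs => by
      rw [Set.uIcc_of_le ht.1] at hs
      exact (hGe s ⟨hs.1, hs.2.trans ht.2⟩).symm
  simp only [intervalIntegral.integral_same, neg_zero, Complex.exp_zero, mul_one] at h2
  rw [h3, ← h2, mul_assoc, ← Complex.exp_add]
  simp

/-- The hypotheses on the logarithmic radial speed `S` of the equation `u' = u S(t, u)`: on the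
closed unit disc it is continuous, bounded by the small number `κ`, and has the continuous
divided difference `DD`. -/
structure RadialField (S : ℝ → ℂ → ℂ) (DD : ℝ → ℂ → ℂ → ℂ) (κ : ℝ) : Prop where
  contS : ContinuousOn (fun x : ℝ × ℂ => S x.1 x.2) {x | ‖x.2‖ ≤ 1}
  contDD : ContinuousOn (fun x : ℝ × ℂ × ℂ => DD x.1 x.2.1 x.2.2) {x | ‖x.2.1‖ ≤ 1 ∧ ‖x.2.2‖ ≤ 1}
  diff : ∀ t a b, ‖a‖ ≤ 1 → ‖b‖ ≤ 1 → S t a - S t b = DD t a b * (a - b)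
  bound : ∀ t a, ‖a‖ ≤ 1 → ‖S t a‖ ≤ κ
  small : 2 * π * κ ≤ 1 / 10

/-- `u` solves `u' = u S(t, u)` on `[0, L]` inside the closed unit disc. -/
def IsRadialSol (S : ℝ → ℂ → ℂ) (L : ℝ) (u : ℝ → ℂ) : Prop :=
  ∀ t ∈ Set.Icc 0 L, HasDerivWithinAt u (u t * S t (u t)) (Set.Icc 0 L) t ∧ ‖u t‖ ≤ 1

lemma IsRadialSol.continuousOn {S : ℝ → ℂ → ℂ} {L : ℝ} {u : ℝ → ℂ} (hu : IsRadialSol S L u) :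
    ContinuousOn u (Set.Icc 0 L) := fun t ht => (hu t ht).1.continuousWithinAt

namespace RadialField

variable {S : ℝ → ℂ → ℂ} {DD : ℝ → ℂ → ℂ → ℂ} {κ : ℝ}

lemma kappa_nonneg (hS : RadialField S DD κ) : 0 ≤ κ :=
  (norm_nonneg _).trans (hS.bound 0 0 (by simp))

lemma eq_mul_exp (hS : RadialField S DD κ) {L : ℝ} (hL : 0 ≤ L) {u : ℝ → ℂ}
    (hu : IsRadialSol S L u) :
    ∀ t ∈ Set.Icc 0 L, u t = u 0 * Complex.exp (∫ s in (0 : ℝ)..t, S s (u s)) := by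
  refine linear_ode_formula hL (H := fun s => S s (u s)) ?_ (fun t ht => ?_)
  · exact hS.contS.comp (f := fun s => (s, u s)) (continuousOn_id.prodMk hu.continuousOn)
      (fun t ht => (hu t ht).2)
  · rw [mul_comm]; exact (hu t ht).1

/-- The divided difference of `a ↦ a S(t, a)`. -/
def H (S : ℝ → ℂ → ℂ) (DD : ℝ → ℂ → ℂ → ℂ) (t : ℝ) (a b : ℂ) : ℂ := S t a + b * DD t a b

lemma contH (hS : RadialField S DD κ) :
    ContinuousOn (fun x : ℝ × ℂ × ℂ => H S DD x.1 x.2.1 x.2.2)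
      {x | ‖x.2.1‖ ≤ 1 ∧ ‖x.2.2‖ ≤ 1} := by
  refine ContinuousOn.add ?_ (ContinuousOn.mul (by fun_prop) hS.contDD)
  exact hS.contS.comp (f := fun x : ℝ × ℂ × ℂ => (x.1, x.2.1)) (by fun_prop) (fun x hx => hx.1)

lemma diffH (hS : RadialField S DD κ) (t : ℝ) (a b : ℂ) (ha : ‖a‖ ≤ 1) (hb : ‖b‖ ≤ 1) :
    a * S t a - b * S t b = H S DD t a b * (a - b) := by
  have := hS.diff t a b ha hb
  simp only [H]; linear_combination b * this

lemma contH_sol (hS : RadialField S DD κ) {L : ℝ} {u w : ℝ → ℂ}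
    (hu : IsRadialSol S L u) (hw : IsRadialSol S L w) :
    ContinuousOn (fun s => H S DD s (u s) (w s)) (Set.Icc 0 L) :=
  hS.contH.comp (f := fun s => (s, u s, w s))
    (continuousOn_id.prodMk (hu.continuousOn.prodMk hw.continuousOn))
    (fun t ht => ⟨(hu t ht).2, (hw t ht).2⟩)

/-- The difference of two solutions solves a linear equation with coefficient `H`. In particular
it vanishes everywhere or nowhere. -/
lemma sub_eq_mul_exp (hS : RadialField S DD κ) {L : ℝ} (hL : 0 ≤ L) {u w : ℝ → ℂ}
    (hu : IsRadialSol S L u) (hw : IsRadialSol S L w) :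
    ∀ t ∈ Set.Icc 0 L,
      u t - w t = (u 0 - w 0) * Complex.exp (∫ s in (0 : ℝ)..t, H S DD s (u s) (w s)) := by
  refine linear_ode_formula hL (f := fun t => u t - w t) (hS.contH_sol hu hw) (fun t ht => ?_)
  rw [← hS.diffH t _ _ (hu t ht).2 (hw t ht).2]
  exact (hu t ht).1.sub (hw t ht).1

lemma exists_boundH (hS : RadialField S DD κ) (L : ℝ) : ∃ K : ℝ, 0 ≤ K ∧
    ∀ t ∈ Set.Icc 0 L, ∀ a b : ℂ, ‖a‖ ≤ 1 → ‖b‖ ≤ 1 → ‖H S DD t a b‖ ≤ K := by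
  have hc : IsCompact (Set.Icc 0 L ×ˢ closedBall (0 : ℂ) 1 ×ˢ closedBall (0 : ℂ) 1) :=
    isCompact_Icc.prod ((isCompact_closedBall _ _).prod (isCompact_closedBall _ _))
  obtain ⟨K, hK⟩ := hc.exists_bound_of_continuousOn (hS.contH.mono (fun x hx => by
    simpa using hx.2))
  refine ⟨max K 0, le_max_right _ _, fun t ht a b ha hb => le_max_of_le_left ?_⟩
  exact hK (t, a, b) ⟨ht, by simpa using ha, by simpa using hb⟩

/-- Picard-Lindelöf on the ball of radius `1/10` around `r`, which a solution cannot leave within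
one turn because `2πκ ≤ 1/10`. -/
lemma exists_sol (hS : RadialField S DD κ) {r : ℂ} (hr : r ∈ ball (0 : ℂ) (4 / 5)) :
    ∃ u : ℝ → ℂ, u 0 = r ∧ IsRadialSol S (2 * π) u := by
  obtain ⟨K, hK0, hK⟩ := hS.exists_boundH (2 * π)
  have hπ : (0 : ℝ) ≤ 2 * π := by positivity
  have hr' : ‖r‖ < 4 / 5 := by simpa using hr
  lift K to ℝ≥0 using hK0
  obtain ⟨k, hk⟩ : ∃ k : ℝ≥0, (k : ℝ) = κ := ⟨⟨κ, hS.kappa_nonneg⟩, rfl⟩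
  have h0 : (0 : ℝ) ∈ Set.Icc 0 (2 * π) := ⟨le_rfl, hπ⟩
  have hball : ∀ x ∈ closedBall r ((1 / 10 : ℝ≥0) : ℝ), ‖x‖ ≤ 1 := fun x hx => by
    have h1 : ‖x - r‖ ≤ 1 / 10 := by simpa [dist_eq_norm] using hx
    have := norm_le_norm_add_norm_sub' x r
    linarith
  have hPL : IsPicardLindelof (fun t u => u * S t u) (⟨0, h0⟩ : Set.Icc (0 : ℝ) (2 * π)) r
      (1 / 10) 0 k K := by
    refine ⟨fun t ht => ?_, fun x hx => ?_, fun t ht x hx => ?_, ?_⟩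
    · refine LipschitzOnWith.of_dist_le_mul fun x hx y hy => ?_
      rw [dist_eq_norm, hS.diffH t x y (hball x hx) (hball y hy), norm_mul, dist_eq_norm]
      exact mul_le_mul_of_nonneg_right (hK t ht _ _ (hball x hx) (hball y hy)) (norm_nonneg _)
    · refine continuousOn_const.mul ?_
      exact hS.contS.comp (f := fun t : ℝ => (t, x)) (by fun_prop) (fun t _ => hball x hx)
    · rw [norm_mul]
      have h1 := hball x hx
      have h2 := hS.bound t x h1
      calc ‖x‖ * ‖S t x‖ ≤ 1 * κ := mul_le_mul h1 h2 (norm_nonneg _) zero_le_one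
        _ = k := by rw [hk, one_mul]
    · have := hS.small
      simp only [sub_zero]
      rw [max_eq_left (by linarith), hk]
      push_cast
      linarith
  obtain ⟨α, hα⟩ := ODE.FunSpace.exists_isFixedPt_next hPL (x := r) (by simp)
  have hmem : ∀ t, α.compProj t ∈ closedBall r ((1 / 10 : ℝ≥0) : ℝ) := fun t =>
    α.compProj_mem_closedBall hPL.mul_max_le
  have hpic : ∀ t ∈ Set.Icc 0 (2 * π),
      α.compProj t = ODE.picard (fun t u => u * S t u) 0 r α.compProj t := fun t ht => by
    conv_lhs => rw [← hα.eq]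
    rw [ODE.FunSpace.compProj_apply, ODE.FunSpace.next_apply, Set.projIcc_of_mem _ ht]
  refine ⟨α.compProj, by rw [hpic 0 h0]; simp, fun t ht => ⟨?_, hball _ (hmem t)⟩⟩
  have hcont : ContinuousOn (Function.uncurry fun t u => u * S t u)
      (Set.Icc 0 (2 * π) ×ˢ closedBall r ((1 / 10 : ℝ≥0) : ℝ)) := by
    refine ContinuousOn.mul (by fun_prop) (hS.contS.mono fun x hx => hball _ hx.2)
  have hder := ODE.hasDerivWithinAt_picard_Icc h0 hcont α.continuous_compProj.continuousOn
    (fun t _ => hmem t) r ht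
  exact hder.congr (fun s hs => hpic s hs) (hpic t ht)

/-- A chosen solution with initial value `r`, for `|r| < 4/5`. -/
noncomputable def sol (hS : RadialField S DD κ) (r : ball (0 : ℂ) (4 / 5)) : ℝ → ℂ :=
  (hS.exists_sol r.2).choose

lemma sol_zero (hS : RadialField S DD κ) (r : ball (0 : ℂ) (4 / 5)) : hS.sol r 0 = r :=
  (hS.exists_sol r.2).choose_spec.1

lemma sol_isSol (hS : RadialField S DD κ) (r : ball (0 : ℂ) (4 / 5)) :
    IsRadialSol S (2 * π) (hS.sol r) :=
  (hS.exists_sol r.2).choose_spec.2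

open Classical in
/-- The Poincaré return map `r ↦ u(2π)`, where `u(0) = r` (and `0` off the disc `|r| < 4/5`). -/
noncomputable def ret (hS : RadialField S DD κ) (r : ℂ) : ℂ :=
  if h : r ∈ ball (0 : ℂ) (4 / 5) then hS.sol ⟨r, h⟩ (2 * π) else 0

lemma ret_eq (hS : RadialField S DD κ) {r : ℂ} (hr : r ∈ ball (0 : ℂ) (4 / 5)) {u : ℝ → ℂ}
    (h0 : u 0 = r) (hu : IsRadialSol S (2 * π) u) : hS.ret r = u (2 * π) := by
  have hπ : (0 : ℝ) ≤ 2 * π := by positivity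
  rw [ret, dif_pos hr]
  have := hS.sub_eq_mul_exp hπ (hS.sol_isSol ⟨r, hr⟩) hu (2 * π) ⟨hπ, le_rfl⟩
  rw [sol_zero, h0, sub_self, zero_mul, sub_eq_zero] at this
  exact this

/-- The return map is holomorphic, since its difference quotients are exponentials of integrals of
`H` along pairs of solutions. -/
lemma hasDerivAt_ret (hS : RadialField S DD κ) {r : ℂ} (hr : r ∈ ball (0 : ℂ) (4 / 5)) {u : ℝ → ℂ}
    (h0 : u 0 = r) (hu : IsRadialSol S (2 * π) u) :
    HasDerivAt hS.ret (Complex.exp (∫ s in (0 : ℝ)..(2 * π), H S DD s (u s) (u s))) r := by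
  have hπ : (0 : ℝ) ≤ 2 * π := by positivity
  obtain ⟨K, hK0, hK⟩ := hS.exists_boundH (2 * π)
  have hall : ∀ x : ℂ, ∃ w : ℝ → ℂ, x ∈ ball (0 : ℂ) (4 / 5) →
      w 0 = x ∧ IsRadialSol S (2 * π) w := fun x => by
    by_cases hx : x ∈ ball (0 : ℂ) (4 / 5)
    · obtain ⟨w, hw⟩ := hS.exists_sol hx
      exact ⟨w, fun _ => hw⟩
    · exact ⟨0, fun h => absurd h hx⟩
  choose W hW using hall
  have hnear : ∀ᶠ x in 𝓝[≠] r, x ∈ ball (0 : ℂ) (4 / 5) :=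
    mem_nhdsWithin_of_mem_nhds (isOpen_ball.mem_nhds hr)
  have hbd : ∀ x ∈ ball (0 : ℂ) (4 / 5), ∀ t ∈ Set.Icc 0 (2 * π),
      ‖W x t - u t‖ ≤ ‖x - r‖ * Real.exp (K * (2 * π)) := fun x hx t ht => by
    have h := hS.sub_eq_mul_exp hπ (hW x hx).2 hu t ht
    rw [h, (hW x hx).1, h0, norm_mul]
    refine mul_le_mul_of_nonneg_left ?_ (norm_nonneg _)
    rw [Complex.norm_exp]
    refine Real.exp_le_exp.2 ((Complex.re_le_norm _).trans ?_)
    have := intervalIntegral.norm_integral_le_of_norm_le_const (a := 0) (b := t) (C := K)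
      (f := fun s => H S DD s (W x s) (u s)) (fun s hs => by
        rw [Set.uIoc_of_le ht.1] at hs
        have hs' : s ∈ Set.Icc 0 (2 * π) := ⟨hs.1.le, hs.2.trans ht.2⟩
        exact hK s hs' _ _ ((hW x hx).2 s hs').2 (hu s hs').2)
    refine this.trans (mul_le_mul_of_nonneg_left ?_ hK0)
    rw [sub_zero, abs_of_nonneg ht.1]; exact ht.2
  rw [hasDerivAt_iff_tendsto_slope]
  have hslope : ∀ᶠ x in 𝓝[≠] r, Complex.exp (∫ s in (0 : ℝ)..(2 * π), H S DD s (W x s) (u s))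
      = slope hS.ret r x := by
    filter_upwards [hnear, self_mem_nhdsWithin] with x hx hne
    have hne' : x - r ≠ 0 := sub_ne_zero.2 hne
    rw [slope_def_field, hS.ret_eq hx (hW x hx).1 (hW x hx).2, hS.ret_eq hr h0 hu,
      hS.sub_eq_mul_exp hπ (hW x hx).2 hu _ ⟨hπ, le_rfl⟩, (hW x hx).1, h0]
    field_simp
  refine Tendsto.congr' hslope ((Complex.continuous_exp.tendsto _).comp ?_)
  refine intervalIntegral.tendsto_integral_filter_of_dominated_convergence (fun _ => K) ?_ ?_
    (by simp) ?_
  · filter_upwards [hnear] with x hx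
    rw [Set.uIoc_of_le hπ]
    exact ((hS.contH_sol (hW x hx).2 hu).mono Set.Ioc_subset_Icc_self).aestronglyMeasurable
      measurableSet_Ioc
  · filter_upwards [hnear] with x hx
    refine .of_forall fun s hs => ?_
    rw [Set.uIoc_of_le hπ] at hs
    have hs' := Set.Ioc_subset_Icc_self hs
    exact hK s hs' _ _ ((hW x hx).2 s hs').2 (hu s hs').2
  · refine .of_forall fun s hs => ?_
    rw [Set.uIoc_of_le hπ] at hs
    have hs' := Set.Ioc_subset_Icc_self hs
    have hc := hS.contH (s, u s, u s) ⟨(hu s hs').2, (hu s hs').2⟩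
    have hto : Tendsto (fun x => W x s) (𝓝[≠] r) (𝓝 (u s)) := by
      rw [tendsto_iff_norm_sub_tendsto_zero]
      refine squeeze_zero' (g := fun x => ‖x - r‖ * Real.exp (K * (2 * π)))
        (.of_forall fun _ => norm_nonneg _) ?_ ?_
      · filter_upwards [hnear] with x hx using hbd x hx s hs'
      · have : Continuous fun x : ℂ => ‖x - r‖ * Real.exp (K * (2 * π)) := by fun_prop
        have := (this.tendsto r).mono_left (nhdsWithin_le_nhds (s := {r}ᶜ))
        simpa using this
    refine Tendsto.comp (f := fun x => (s, W x s, u s))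
      (g := fun x : ℝ × ℂ × ℂ => H S DD x.1 x.2.1 x.2.2) hc ?_
    refine tendsto_nhdsWithin_iff.2 ⟨?_, ?_⟩
    · exact tendsto_const_nhds.prodMk_nhds (hto.prodMk_nhds tendsto_const_nhds)
    · filter_upwards [hnear] with x hx using ⟨((hW x hx).2 s hs').2, (hu s hs').2⟩

/-- The holomorphic relative displacement function `u(2π)/r - 1`. -/
lemma exists_displacement (hS : RadialField S DD κ) :
    ∃ D : ℂ → ℂ, DifferentiableOn ℂ D (ball 0 (4 / 5)) ∧
      (∀ r ∈ ball (0 : ℂ) (4 / 5), ‖D r‖ ≤ 4 * π * κ) ∧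
      D 0 = Complex.exp (∫ s in (0 : ℝ)..(2 * π), S s 0) - 1 ∧
      ∀ r ∈ ball (0 : ℂ) (4 / 5), r ≠ 0 → ∀ u : ℝ → ℂ, u 0 = r → IsRadialSol S (2 * π) u →
        u (2 * π) = r → D r = 0 := by
  have hπ : (0 : ℝ) ≤ 2 * π := by positivity
  have h0 : (0 : ℂ) ∈ ball (0 : ℂ) (4 / 5) := by simp
  have hz : IsRadialSol S (2 * π) (fun _ => 0) := fun t _ => ⟨by
    simpa using hasDerivWithinAt_const t _ (0 : ℂ), by simp⟩
  have hret0 : hS.ret 0 = 0 := hS.ret_eq h0 (u := fun _ => 0) rfl hz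
  have hbound : ∀ u : ℝ → ℂ, IsRadialSol S (2 * π) u →
      ‖Complex.exp (∫ s in (0 : ℝ)..(2 * π), S s (u s)) - 1‖ ≤ 4 * π * κ := fun u hu => by
    have h1 : ‖∫ s in (0 : ℝ)..(2 * π), S s (u s)‖ ≤ 2 * π * κ := by
      have := intervalIntegral.norm_integral_le_of_norm_le_const (a := 0) (b := 2 * π) (C := κ)
        (f := fun s => S s (u s)) (fun s hs => by
          rw [Set.uIoc_of_le hπ] at hs
          exact hS.bound s _ (hu s (Set.Ioc_subset_Icc_self hs)).2)
      rw [sub_zero, abs_of_nonneg hπ] at this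
      linarith
    have h2 := Complex.norm_exp_sub_one_le (x := ∫ s in (0 : ℝ)..(2 * π), S s (u s))
      (h1.trans (hS.small.trans (by norm_num)))
    linarith
  have hd0 : dslope hS.ret 0 0 - 1 = Complex.exp (∫ s in (0 : ℝ)..(2 * π), S s 0) - 1 := by
    rw [dslope_same, (hS.hasDerivAt_ret h0 (u := fun _ => 0) rfl hz).deriv]
    simp [H]
  have hdr : ∀ r ∈ ball (0 : ℂ) (4 / 5), r ≠ 0 → ∀ u : ℝ → ℂ, u 0 = r → IsRadialSol S (2 * π) u →
      dslope hS.ret 0 r - 1 = u (2 * π) / r - 1 := fun r hr hne u hu0 hu => by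
    rw [dslope_of_ne _ hne, slope_def_field, hret0, hS.ret_eq hr hu0 hu, sub_zero, sub_zero]
  refine ⟨fun r => dslope hS.ret 0 r - 1, ?_, fun r hr => ?_, hd0, fun r hr hne u hu0 hu h => ?_⟩
  · refine DifferentiableOn.sub_const ?_ _
    refine (Complex.differentiableOn_dslope (isOpen_ball.mem_nhds h0)).2 fun r hr => ?_
    obtain ⟨u, hu0, hu⟩ := hS.exists_sol hr
    exact (hS.hasDerivAt_ret hr hu0 hu).differentiableAt.differentiableWithinAt
  · beta_reduce
    rcases eq_or_ne r 0 with rfl | hne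
    · rw [hd0]; exact hbound _ hz
    · obtain ⟨u, hu0, hu⟩ := hS.exists_sol hr
      rw [hdr r hr hne u hu0 hu, hS.eq_mul_exp hπ hu _ ⟨hπ, le_rfl⟩, hu0, mul_div_cancel_left₀ _ hne]
      exact hbound u hu
  · simp only
    rw [hdr r hr hne u hu0 hu, h, div_self hne, sub_self]

end RadialField

/-! ### Counting zeros of holomorphic functions -/

/-- Dividing a holomorphic function by the linear factors of finitely many of its zeros. -/
lemma factor_zeros {r : ℝ} {g : ℂ → ℂ} (hg : DifferentiableOn ℂ g (ball 0 r)) (s : Finset ℂ)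
    (hs : ∀ a ∈ s, a ∈ ball (0 : ℂ) r ∧ g a = 0) :
    ∃ h : ℂ → ℂ, DifferentiableOn ℂ h (ball 0 r) ∧ ∀ z, g z = (∏ a ∈ s, (z - a)) * h z := by
  classical
  induction s using Finset.induction_on with
  | empty => exact ⟨g, hg, by simp⟩
  | insert a s ha ih =>
    obtain ⟨h, hh, hgh⟩ := ih fun b hb => hs b (Finset.mem_insert_of_mem hb)
    obtain ⟨har, hga⟩ := hs a (Finset.mem_insert_self _ _)
    have hh0 : h a = 0 := by
      have := hgh a
      rw [hga, eq_comm, mul_eq_zero] at this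
      refine this.resolve_left (Finset.prod_ne_zero_iff.2 fun b hb => sub_ne_zero.2 ?_)
      rintro rfl; exact ha hb
    refine ⟨dslope h a, (Complex.differentiableOn_dslope (isOpen_ball.mem_nhds har)).2 hh,
      fun z => ?_⟩
    have h1 : (z - a) * dslope h a z = h z := by
      have := sub_smul_dslope h a z
      rwa [smul_eq_mul, hh0, sub_zero] at this
    rw [Finset.prod_insert ha, hgh z, ← h1]; ring

/-- A form of Jensen's inequality: each zero in `(0, 1/2]` forces a factor `(1/2)/(3/4)` in the
bound of the value at the centre, by comparison with a Blaschke product on `|z| < 3/4`. -/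
lemma norm_le_of_zeros {g : ℂ → ℂ} {M : ℝ} (hg : DifferentiableOn ℂ g (ball 0 (4 / 5)))
    (hM : ∀ z ∈ ball (0 : ℂ) (4 / 5), ‖g z‖ ≤ M) (s : Finset ℝ)
    (hs : ∀ a ∈ s, 0 < a ∧ a ≤ 1 / 2 ∧ g (a : ℂ) = 0) :
    ‖g 0‖ ≤ M * (2 / 3) ^ s.card := by
  obtain ⟨h, hh, hgh⟩ := factor_zeros hg (s.map ⟨((↑) : ℝ → ℂ), Complex.ofReal_injective⟩) (by
    simp only [Finset.mem_map, Function.Embedding.coeFn_mk, forall_exists_index, and_imp]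
    rintro _ a ha rfl
    obtain ⟨h1, h2, h3⟩ := hs a ha
    refine ⟨?_, h3⟩
    rw [mem_ball_zero_iff, Complex.norm_real, Real.norm_of_nonneg h1.le]; linarith)
  simp only [Finset.prod_map, Function.Embedding.coeFn_mk] at hgh
  set k : ℂ → ℂ := fun z => h z * ∏ a ∈ s, ((3 / 4 : ℝ) - (4 / 3 : ℝ) * a * z : ℂ) with hk
  have hsub : closedBall (0 : ℂ) (3 / 4) ⊆ ball 0 (4 / 5) := closedBall_subset_ball (by norm_num)
  have hkd : DifferentiableOn ℂ k (ball 0 (4 / 5)) := by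
    refine hh.mul (Differentiable.differentiableOn ?_)
    fun_prop
  have hfr : ∀ z ∈ frontier (ball (0 : ℂ) (3 / 4)), ‖k z‖ ≤ M := fun z hz => by
    rw [frontier_ball _ (by norm_num)] at hz
    have hz' : ‖z‖ = 3 / 4 := by simpa using hz
    have : ‖k z‖ = ‖g z‖ := by
      rw [hgh z, hk]
      simp only [norm_mul, norm_prod]
      rw [mul_comm]
      congr 1
      refine Finset.prod_congr rfl fun a _ => ?_
      have hconj : z * (starRingEnd ℂ) z = ((3 / 4 : ℝ) ^ 2 : ℝ) := by
        rw [Complex.mul_conj, Complex.normSq_eq_norm_sq, hz']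
      have e : ((3 / 4 : ℝ) - (4 / 3 : ℝ) * a * z : ℂ)
          = (4 / 3 : ℝ) * (z * (starRingEnd ℂ) (z - a)) := by
        rw [map_sub, Complex.conj_ofReal, mul_sub, hconj]
        push_cast; ring
      rw [e, norm_mul, norm_mul, hz', RCLike.norm_conj, Complex.norm_real]
      norm_num
      ring
    rw [this]
    exact hM z (hsub (sphere_subset_closedBall hz))
  have hk0 := Complex.norm_le_of_forall_mem_frontier_norm_le isBounded_ball
    (hkd.diffContOnCl_ball hsub) hfr (z := 0) (subset_closure (by simp))
  have hk0' : ‖k 0‖ = ‖h 0‖ * (3 / 4) ^ s.card := by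
    rw [hk]
    simp [div_pow]
  have hg0 : ‖g 0‖ ≤ (1 / 2) ^ s.card * ‖h 0‖ := by
    rw [hgh 0, norm_mul, norm_prod]
    refine mul_le_mul_of_nonneg_right ?_ (norm_nonneg _)
    refine (Finset.prod_le_prod (fun a _ => norm_nonneg _) fun a ha => ?_).trans_eq
      (Finset.prod_const (1 / 2 : ℝ))
    obtain ⟨h1, h2, h3⟩ := hs a ha
    rw [zero_sub, norm_neg, Complex.norm_real, Real.norm_of_nonneg h1.le]; exact h2
  calc ‖g 0‖ ≤ (1 / 2) ^ s.card * ‖h 0‖ := hg0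
    _ = (‖h 0‖ * (3 / 4) ^ s.card) * (2 / 3) ^ s.card := by
      rw [mul_assoc, ← mul_pow, mul_comm]; norm_num
    _ ≤ M * (2 / 3) ^ s.card := by
      rw [← hk0']; gcongr

/-! ### Slabs in convex sets -/

/-- In a convex set `V` containing a point `p` with `|ℓ p| ≥ c`, the slab `|ℓ| ≤ ε` has relative
measure at most `12 (k+1) ε / c`, for any measure `μ` scaling with exponent `k` under homotheties:
contracting the slab towards `p` produces about `c / (6 (k+1) ε)` disjoint subsets of `V`, each of
at least half its measure. -/
lemma slab_measure_le {E : Type*} [NormedAddCommGroup E] [NormedSpace ℝ E] [MeasurableSpace E]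
    [BorelSpace E] (μ : Measure E) (k : ℕ)
    (hμ : ∀ (p : E) (θ : ℝ), 0 < θ → ∀ S : Set E,
      μ (AffineMap.homothety p θ '' S) = ENNReal.ofReal (θ ^ k) * μ S)
    (ℓ : E →L[ℝ] ℝ) {V : Set E} (hV : Convex ℝ V) {p : E} (hp : p ∈ V) {c ε : ℝ}
    (hc : 0 < c) (hε : 0 < ε) (hpc : c ≤ |ℓ p|) :
    μ {v ∈ V | |ℓ v| ≤ ε} ≤ ENNReal.ofReal (12 * (k + 1) * ε / c) * μ V := by
  wlog hpos : 0 ≤ ℓ p generalizing ℓ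
  · have := this (-ℓ) (by simpa using hpc) (by simp; linarith)
    simpa using this
  rw [abs_of_nonneg hpos] at hpc
  have hℓp : 0 < ℓ p := hc.trans_le hpc
  set S := {v ∈ V | |ℓ v| ≤ ε} with hS
  set J : ℕ := ⌊c / (6 * (k + 1) * ε)⌋₊ + 1 with hJ
  have hk : (0 : ℝ) < k + 1 := by positivity
  have hJlt : c / (6 * (k + 1) * ε) < J := by
    rw [hJ]; push_cast; exact Nat.lt_floor_add_one _
  set slab : ℕ → Set E := fun j => {v | |ℓ v - 3 * ε * j| ≤ ε} with hslab
  have hmeas : ∀ j, MeasurableSet (slab j) := fun j => by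
    refine (isClosed_le ?_ continuous_const).measurableSet
    fun_prop
  have hdisj : Pairwise (Function.onFun Disjoint slab) := by
    intro i j hij
    refine Set.disjoint_left.2 fun v hi hj => hij ?_
    have h1 := abs_le.1 (show |ℓ v - 3 * ε * i| ≤ ε from hi)
    have h2 := abs_le.1 (show |ℓ v - 3 * ε * j| ≤ ε from hj)
    by_contra hne
    rcases lt_or_gt_of_ne hne with h | h
    · have : (i : ℝ) + 1 ≤ j := by exact_mod_cast h
      nlinarith
    · have : (j : ℝ) + 1 ≤ i := by exact_mod_cast h
      nlinarith
  have hone : ∀ j < J, ENNReal.ofReal (1 / 2) * μ S ≤ μ (slab j ∩ V) := fun j hj => by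
    have hjle : (j : ℝ) ≤ c / (6 * (k + 1) * ε) :=
      (Nat.le_floor_iff (by positivity)).1 (by omega)
    rw [le_div_iff₀ (by positivity)] at hjle
    set η : ℝ := 3 * ε * j / ℓ p with hη
    have hη0 : 0 ≤ η := by positivity
    have hηk : (k + 1) * η ≤ 1 / 2 := by
      rw [hη, mul_div_assoc', div_le_iff₀ hℓp]; nlinarith
    have hη1 : η ≤ 1 / 2 := by nlinarith
    have hpow : (1 / 2 : ℝ) ≤ (1 - η) ^ k := by
      have := one_add_mul_le_pow (a := -η) (by linarith) k
      rw [← sub_eq_add_neg] at this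
      nlinarith
    calc ENNReal.ofReal (1 / 2) * μ S ≤ ENNReal.ofReal ((1 - η) ^ k) * μ S := by gcongr
      _ = μ (AffineMap.homothety p (1 - η) '' S) := (hμ p _ (by linarith) S).symm
      _ ≤ μ (slab j ∩ V) := by
        refine measure_mono ?_
        rintro _ ⟨v, ⟨hv, hvε⟩, rfl⟩
        have hval : AffineMap.homothety p (1 - η) v = (1 - η) • v + η • p := by
          rw [AffineMap.homothety_apply, vsub_eq_sub, vadd_eq_add]
          module
        rw [hval]
        refine ⟨?_, hV hv hp (by linarith) hη0 (by ring)⟩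
        have : ℓ ((1 - η) • v + η • p) - 3 * ε * j = (1 - η) * ℓ v := by
          have : η * ℓ p = 3 * ε * j := by rw [hη]; field_simp
          simp only [map_add, map_smul, smul_eq_mul]; linarith
        show |ℓ ((1 - η) • v + η • p) - 3 * ε * j| ≤ ε
        rw [this, abs_mul, abs_of_nonneg (by linarith)]
        nlinarith [abs_nonneg (ℓ v)]
  have hsum : (J : ℝ≥0∞) * (ENNReal.ofReal (1 / 2) * μ S) ≤ μ V := by
    calc (J : ℝ≥0∞) * (ENNReal.ofReal (1 / 2) * μ S)
        = ∑ j ∈ Finset.range J, ENNReal.ofReal (1 / 2) * μ S := by simp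
      _ ≤ ∑ j ∈ Finset.range J, μ.restrict V (slab j) := by
        refine Finset.sum_le_sum fun j hj => ?_
        rw [Measure.restrict_apply (hmeas j)]
        exact hone j (Finset.mem_range.1 hj)
      _ = μ.restrict V (⋃ j ∈ Finset.range J, slab j) :=
        (measure_biUnion_finset (fun i _ j _ h => hdisj h) fun j _ => hmeas j).symm
      _ ≤ μ.restrict V Set.univ := measure_mono (Set.subset_univ _)
      _ = μ V := by simp
  have hone' : (1 : ℝ) ≤ 12 * (k + 1) * ε / c * (J * (1 / 2)) := by
    rw [div_lt_iff₀ (by positivity)] at hJlt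
    rw [div_mul_eq_mul_div, le_div_iff₀ hc]; nlinarith
  calc μ S = 1 * μ S := (one_mul _).symm
    _ ≤ ENNReal.ofReal (12 * (k + 1) * ε / c * (J * (1 / 2))) * μ S := by
      gcongr; exact ENNReal.one_le_ofReal.2 hone'
    _ = ENNReal.ofReal (12 * (k + 1) * ε / c) * ((J : ℝ≥0∞) * (ENNReal.ofReal (1 / 2) * μ S)) := by
      rw [ENNReal.ofReal_mul (by positivity), ENNReal.ofReal_mul (by positivity),
        ENNReal.ofReal_natCast]
      ring
    _ ≤ _ := by gcongr

/-! ### The polar form of the vector field -/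

/-- The polynomial `∑ c_{ik}(t) u^{i+k-1}` in the radial variable `u`. -/
noncomputable def radPoly {d : ℕ} (c : ↥(coeffIdx d) → ℝ → ℝ) (t : ℝ) (u : ℂ) : ℂ :=
  ∑ p : ↥(coeffIdx d), (c p t : ℂ) * u ^ ((p : ℕ × ℕ).1 + (p : ℕ × ℕ).2 - 1)

/-- The same polynomial at a real argument. -/
noncomputable def radPolyR {d : ℕ} (c : ↥(coeffIdx d) → ℝ → ℝ) (t : ℝ) (u : ℝ) : ℝ :=
  ∑ p : ↥(coeffIdx d), c p t * u ^ ((p : ℕ × ℕ).1 + (p : ℕ × ℕ).2 - 1)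

lemma radPoly_ofReal {d : ℕ} (c : ↥(coeffIdx d) → ℝ → ℝ) (t u : ℝ) :
    radPoly c t (u : ℂ) = (radPolyR c t u : ℂ) := by
  simp [radPoly, radPolyR]

/-- The divided difference of `radPoly` in the radial variable. -/
noncomputable def radDD {d : ℕ} (c : ↥(coeffIdx d) → ℝ → ℝ) (t : ℝ) (a b : ℂ) : ℂ :=
  ∑ p : ↥(coeffIdx d), (c p t : ℂ) *
    ∑ i ∈ Finset.range ((p : ℕ × ℕ).1 + (p : ℕ × ℕ).2 - 1),
      a ^ i * b ^ ((p : ℕ × ℕ).1 + (p : ℕ × ℕ).2 - 1 - 1 - i)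

lemma radPoly_sub {d : ℕ} (c : ↥(coeffIdx d) → ℝ → ℝ) (t : ℝ) (a b : ℂ) :
    radPoly c t a - radPoly c t b = radDD c t a b * (a - b) := by
  simp only [radPoly, radDD, ← Finset.sum_sub_distrib, Finset.sum_mul]
  refine Finset.sum_congr rfl fun p _ => ?_
  rw [← mul_sub, mul_assoc, (Commute.all a b).geom_sum₂_mul]

lemma continuous_radPoly {d : ℕ} {c : ↥(coeffIdx d) → ℝ → ℝ} (hc : ∀ p, Continuous (c p)) :
    Continuous fun x : ℝ × ℂ => radPoly c x.1 x.2 := by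
  unfold radPoly; fun_prop

lemma continuous_radDD {d : ℕ} {c : ↥(coeffIdx d) → ℝ → ℝ} (hc : ∀ p, Continuous (c p)) :
    Continuous fun x : ℝ × ℂ × ℂ => radDD c x.1 x.2.1 x.2.2 := by
  unfold radDD; fun_prop

/-- The monomial `x^k y^i` restricted to the unit circle. -/
noncomputable def trigMono {d : ℕ} (p : ↥(coeffIdx d)) (t : ℝ) : ℝ :=
  Real.cos t ^ (p : ℕ × ℕ).2 * Real.sin t ^ (p : ℕ × ℕ).1

/-- Coefficients of the radial component `P`, where `r' = r P(θ, r)`. -/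
noncomputable def cP {d : ℕ} (v : CoefSpace d) (p : ↥(coeffIdx d)) (t : ℝ) : ℝ :=
  (v (Sum.inl p) * Real.cos t + v (Sum.inr p) * Real.sin t) * trigMono p t

/-- Coefficients of the angular component `Q`, where `θ' = 1 + Q(θ, r)`. -/
noncomputable def cQ {d : ℕ} (v : CoefSpace d) (p : ↥(coeffIdx d)) (t : ℝ) : ℝ :=
  (v (Sum.inr p) * Real.cos t - v (Sum.inl p) * Real.sin t) * trigMono p t

lemma continuous_cP {d : ℕ} (v : CoefSpace d) (p : ↥(coeffIdx d)) : Continuous (cP v p) := by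
  unfold cP trigMono; fun_prop

lemma continuous_cQ {d : ℕ} (v : CoefSpace d) (p : ↥(coeffIdx d)) : Continuous (cQ v p) := by
  unfold cQ trigMono; fun_prop

lemma cP_periodic {d : ℕ} (v : CoefSpace d) (p : ↥(coeffIdx d)) (t : ℝ) :
    cP v p (t + 2 * π) = cP v p t := by
  simp [cP, trigMono]

lemma cQ_periodic {d : ℕ} (v : CoefSpace d) (p : ↥(coeffIdx d)) (t : ℝ) :
    cQ v p (t + 2 * π) = cQ v p t := by
  simp [cQ, trigMono]

lemma sum_antidiagonal_le_pow {x y : ℝ} (hx : 0 ≤ x) (hy : 0 ≤ y) (m : ℕ) :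
    ∑ q ∈ Finset.HasAntidiagonal.antidiagonal m, x ^ q.1 * y ^ q.2 ≤ (x + y) ^ m := by
  rw [(Commute.all x y).add_pow']
  refine Finset.sum_le_sum fun q hq => ?_
  rw [nsmul_eq_mul]
  have h1 : (1 : ℝ) ≤ m.choose q.1 := by
    exact_mod_cast Nat.choose_pos (by rw [Finset.HasAntidiagonal.mem_antidiagonal] at hq; omega)
  exact le_mul_of_one_le_left (by positivity) h1

lemma sum_trigMono_sq_le (d : ℕ) (t : ℝ) : ∑ p : ↥(coeffIdx d), trigMono p t ^ 2 ≤ d := by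
  have h1 : ∑ p : ↥(coeffIdx d), trigMono p t ^ 2
      = ∑ p ∈ coeffIdx d, (Real.sin t ^ 2) ^ p.1 * (Real.cos t ^ 2) ^ p.2 := by
    rw [← Finset.sum_coe_sort (coeffIdx d)
      (fun p : ℕ × ℕ => (Real.sin t ^ 2) ^ p.1 * (Real.cos t ^ 2) ^ p.2)]
    refine Finset.sum_congr rfl fun p _ => ?_
    simp only [trigMono]; ring
  have h2 : ∀ p ∈ coeffIdx d, p.1 + p.2 ∈ Finset.Icc 1 d := fun p hp => by
    simp only [coeffIdx, Finset.mem_filter] at hp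
    exact Finset.mem_Icc.2 hp.2
  rw [h1, ← Finset.sum_fiberwise_of_maps_to h2]
  calc _ ≤ ∑ m ∈ Finset.Icc 1 d, (1 : ℝ) := by
        refine Finset.sum_le_sum fun m _ => ?_
        calc _ ≤ ∑ q ∈ Finset.HasAntidiagonal.antidiagonal m, (Real.sin t ^ 2) ^ q.1 * (Real.cos t ^ 2) ^ q.2 := by
              refine Finset.sum_le_sum_of_subset_of_nonneg (fun q hq => ?_)
                fun _ _ _ => by positivity
              simpa using (Finset.mem_filter.1 hq).2
          _ ≤ (Real.sin t ^ 2 + Real.cos t ^ 2) ^ m :=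
              sum_antidiagonal_le_pow (by positivity) (by positivity) m
          _ = 1 := by simp
    _ = d := by simp

/-- Cauchy-Schwarz bound for the polynomials `P` and `Q` on the unit disc. -/
lemma norm_radPoly_le {d : ℕ} {N : ℝ} (α β : ↥(coeffIdx d) → ℝ)
    (hN : 0 ≤ N) (h : ∑ p, (α p ^ 2 + β p ^ 2) ≤ N ^ 2) (t : ℝ) (x y : ℝ) (hxy : x ^ 2 + y ^ 2 = 1)
    (u : ℂ) (hu : ‖u‖ ≤ 1) :
    ‖radPoly (fun p t => (α p * x + β p * y) * trigMono p t) t u‖ ≤ N * Real.sqrt d := by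
  calc ‖radPoly (fun p t => (α p * x + β p * y) * trigMono p t) t u‖
      ≤ ∑ p, |α p * x + β p * y| * |trigMono p t| := by
        refine norm_sum_le_of_le _ fun p _ => ?_
        rw [norm_mul, norm_pow, Complex.norm_real, Real.norm_eq_abs, abs_mul]
        exact mul_le_of_le_one_right (by positivity) (pow_le_one₀ (norm_nonneg _) hu)
    _ ≤ Real.sqrt (∑ p, |α p * x + β p * y| ^ 2) * Real.sqrt (∑ p, |trigMono p t| ^ 2) :=
        Real.sum_mul_le_sqrt_mul_sqrt _ _ _
    _ ≤ N * Real.sqrt d := by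
        gcongr
        · rw [Real.sqrt_le_left hN]
          refine le_trans (Finset.sum_le_sum fun p _ => ?_) h
          rw [sq_abs]
          have := sq_nonneg (α p * y - β p * x)
          have e : (α p * x + β p * y) ^ 2 + (α p * y - β p * x) ^ 2
            = (α p ^ 2 + β p ^ 2) * (x ^ 2 + y ^ 2) := by ring
          rw [hxy, mul_one] at e
          linarith
        · simpa only [sq_abs] using sum_trigMono_sq_le d t

lemma sum_sq_eq_norm_sq {d : ℕ} (v : CoefSpace d) :
    ∑ p, (v (Sum.inl p) ^ 2 + v (Sum.inr p) ^ 2) = ‖v‖ ^ 2 := by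
  rw [EuclideanSpace.real_norm_sq_eq, Fintype.sum_sum_type, Finset.sum_add_distrib]

lemma norm_P_le {d : ℕ} {N : ℝ} {v : CoefSpace d} (hv : ‖v‖ ≤ N) (t : ℝ) (u : ℂ) (hu : ‖u‖ ≤ 1) :
    ‖radPoly (cP v) t u‖ ≤ N * Real.sqrt d :=
  norm_radPoly_le (fun p => v (Sum.inl p)) (fun p => v (Sum.inr p)) ((norm_nonneg _).trans hv)
    (by rw [sum_sq_eq_norm_sq]; gcongr) t (Real.cos t) (Real.sin t) (by simp) u hu

lemma norm_Q_le {d : ℕ} {N : ℝ} {v : CoefSpace d} (hv : ‖v‖ ≤ N) (t : ℝ) (u : ℂ) (hu : ‖u‖ ≤ 1) :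
    ‖radPoly (cQ v) t u‖ ≤ N * Real.sqrt d := by
  have := norm_radPoly_le (fun p => v (Sum.inl p)) (fun p => v (Sum.inr p))
    ((norm_nonneg _).trans hv)
    (by rw [sum_sq_eq_norm_sq]; gcongr) t (-Real.sin t) (Real.cos t) (by simp) u hu
  convert this using 2
  simp only [radPoly, cQ]
  refine Finset.sum_congr rfl fun p _ => ?_
  congr 3; ring

/-- The logarithmic radial speed `P / (1 + Q)` with respect to the polar angle. -/
noncomputable def Sfield {d : ℕ} (v : CoefSpace d) (t : ℝ) (u : ℂ) : ℂ :=
  radPoly (cP v) t u / (1 + radPoly (cQ v) t u)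

/-- The divided difference of `Sfield`. -/
noncomputable def SDD {d : ℕ} (v : CoefSpace d) (t : ℝ) (a b : ℂ) : ℂ :=
  (radDD (cP v) t a b * (1 + radPoly (cQ v) t b) - radPoly (cP v) t b * radDD (cQ v) t a b) /
    ((1 + radPoly (cQ v) t a) * (1 + radPoly (cQ v) t b))

lemma le_norm_one_add_Q {d : ℕ} {N : ℝ} {v : CoefSpace d} (hv : ‖v‖ ≤ N)
    (hN : N * Real.sqrt d ≤ 1 / 100) (t : ℝ) (u : ℂ) (hu : ‖u‖ ≤ 1) :
    1 / 2 ≤ ‖1 + radPoly (cQ v) t u‖ := by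
  have h1 := norm_Q_le hv t u hu
  have h2 := norm_sub_le_norm_add (1 : ℂ) (radPoly (cQ v) t u)
  rw [norm_one] at h2
  linarith

lemma one_add_Q_ne_zero {d : ℕ} {N : ℝ} {v : CoefSpace d} (hv : ‖v‖ ≤ N)
    (hN : N * Real.sqrt d ≤ 1 / 100) (t : ℝ) (u : ℂ) (hu : ‖u‖ ≤ 1) :
    1 + radPoly (cQ v) t u ≠ 0 := by
  have := le_norm_one_add_Q hv hN t u hu
  rw [← norm_pos_iff]; linarith

lemma radialField_Sfield {d : ℕ} {N : ℝ} {v : CoefSpace d} (hv : ‖v‖ ≤ N)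
    (hN : N * Real.sqrt d ≤ 1 / (40 * π)) (hN' : N * Real.sqrt d ≤ 1 / 100) :
    RadialField (Sfield v) (SDD v) (2 * (N * Real.sqrt d)) where
  contS := by
    refine ContinuousOn.div (continuous_radPoly (continuous_cP v)).continuousOn ?_ ?_
    · exact (continuous_const.add (continuous_radPoly (continuous_cQ v))).continuousOn
    · exact fun x hx => one_add_Q_ne_zero hv hN' _ _ hx
  contDD := by
    have c1 := continuous_radDD (continuous_cP v)
    have c2 := continuous_radDD (continuous_cQ v)
    have c3 := (continuous_radPoly (continuous_cP v)).comp
      (f := fun x : ℝ × ℂ × ℂ => (x.1, x.2.2)) (by fun_prop)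
    have c4 := (continuous_radPoly (continuous_cQ v)).comp
      (f := fun x : ℝ × ℂ × ℂ => (x.1, x.2.2)) (by fun_prop)
    have c5 := (continuous_radPoly (continuous_cQ v)).comp
      (f := fun x : ℝ × ℂ × ℂ => (x.1, x.2.1)) (by fun_prop)
    simp only [Function.comp_def] at c3 c4 c5
    refine ContinuousOn.div ?_ ?_ ?_
    · exact ((c1.mul (continuous_const.add c4)).sub (c3.mul c2)).continuousOn
    · exact ((continuous_const.add c5).mul (continuous_const.add c4)).continuousOn
    · exact fun x hx => mul_ne_zero (one_add_Q_ne_zero hv hN' _ _ hx.1)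
        (one_add_Q_ne_zero hv hN' _ _ hx.2)
  diff t a b ha hb := by
    have h1 := one_add_Q_ne_zero hv hN' t a ha
    have h2 := one_add_Q_ne_zero hv hN' t b hb
    have e1 := radPoly_sub (cP v) t a b
    have e2 := radPoly_sub (cQ v) t a b
    rw [Sfield, Sfield, SDD, div_sub_div _ _ h1 h2, div_mul_eq_mul_div]
    congr 1
    linear_combination (1 + radPoly (cQ v) t b) * e1 - radPoly (cP v) t b * e2
  bound t a ha := by
    have h1 := norm_P_le hv t a ha
    have h2 := le_norm_one_add_Q hv hN' t a ha
    rw [Sfield, norm_div, div_le_iff₀ (by linarith)]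
    have : 0 ≤ N * Real.sqrt d := (norm_nonneg _).trans h1
    nlinarith
  small := by
    rw [le_div_iff₀ (by positivity)] at hN
    linarith

/-! ### The linear part -/

/-- The trace `a₁₀ + b₀₁` of the linear part, as a function on `ℝ⁴`. -/
noncomputable def traceForm : EuclideanSpace ℝ (Fin 4) →L[ℝ] ℝ :=
  EuclideanSpace.proj 0 + EuclideanSpace.proj 3

lemma mem_coeffIdx_01 {d : ℕ} (h : 1 ≤ d) : (0, 1) ∈ coeffIdx d := by simp [coeffIdx]; omega

lemma mem_coeffIdx_10 {d : ℕ} (h : 1 ≤ d) : (1, 0) ∈ coeffIdx d := by simp [coeffIdx]; omega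

lemma radPolyR_zero {d : ℕ} (h : 1 ≤ d) (c : ↥(coeffIdx d) → ℝ → ℝ) (t : ℝ) :
    radPolyR c t 0 = c ⟨(0, 1), mem_coeffIdx_01 h⟩ t + c ⟨(1, 0), mem_coeffIdx_10 h⟩ t := by
  rw [radPolyR, Fintype.sum_eq_add ⟨(0, 1), mem_coeffIdx_01 h⟩ ⟨(1, 0), mem_coeffIdx_10 h⟩]
  · simp
  · simp
  · rintro ⟨⟨i, k⟩, hp⟩ ⟨h1, h2⟩
    simp only [ne_eq, Subtype.mk.injEq, Prod.mk.injEq] at h1 h2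
    simp only [coeffIdx, Finset.mem_filter, Finset.mem_product, Finset.mem_range] at hp
    rw [zero_pow (by simp only; omega), mul_zero]

lemma traceForm_proj {d : ℕ} (h : 1 ≤ d) (v : CoefSpace d) :
    traceForm (proj d v) = v (Sum.inl ⟨(0, 1), mem_coeffIdx_01 h⟩)
      + v (Sum.inr ⟨(1, 0), mem_coeffIdx_10 h⟩) := by
  simp [traceForm, proj, dif_pos h]

lemma hasDerivAt_one_add_Q_zero {d : ℕ} (h : 1 ≤ d) (v : CoefSpace d) (t : ℝ) :
    HasDerivAt (fun t => 1 + radPolyR (cQ v) t 0)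
      (traceForm (proj d v) - 2 * radPolyR (cP v) t 0) t := by
  simp only [radPolyR_zero h, traceForm_proj h, cQ, cP, trigMono]
  have hs := Real.hasDerivAt_sin t
  have hc := Real.hasDerivAt_cos t
  simp only [pow_zero, pow_one, mul_one, one_mul]
  generalize v (Sum.inl ⟨(0, 1), _⟩) = a
  generalize v (Sum.inl ⟨(1, 0), _⟩) = b
  generalize v (Sum.inr ⟨(0, 1), _⟩) = a'
  generalize v (Sum.inr ⟨(1, 0), _⟩) = b'
  refine (((((hc.const_mul a').sub (hs.const_mul a)).mul hc).add
    (((hc.const_mul b').sub (hs.const_mul b)).mul hs)).const_add 1).congr_deriv ?_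
  have := Real.sin_sq_add_cos_sq t
  simp only [Pi.sub_apply]
  linear_combination (a + b') * this

/-- At the origin, the displacement is bounded below by the trace of the linear part: since
`(1 + Q)' = tr - 2P` at `r = 0`, the integral of `P / (1 + Q)` is `(tr/2) ∫ 1 / (1 + Q)`. -/
lemma abs_trace_le {d : ℕ} (h : 1 ≤ d) {N : ℝ} {v : CoefSpace d} (hv : ‖v‖ ≤ N)
    (hN : N * Real.sqrt d ≤ 1 / (40 * π)) (hN' : N * Real.sqrt d ≤ 1 / 100) :
    |traceForm (proj d v)| ≤ ‖Complex.exp (∫ s in (0 : ℝ)..(2 * π), Sfield v s 0) - 1‖ := by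
  set τ := traceForm (proj d v) with hτ
  have hπ : (0 : ℝ) ≤ 2 * π := by positivity
  set q : ℝ → ℝ := fun t => 1 + radPolyR (cQ v) t 0 with hq
  have hQ : ∀ t, |radPolyR (cQ v) t 0| ≤ 1 / 100 := fun t => by
    have := norm_Q_le hv t 0 (by simp)
    rw [← Complex.ofReal_zero, radPoly_ofReal, Complex.norm_real] at this
    exact this.trans hN'
  have hq1 : ∀ t, 1 / 2 ≤ q t ∧ q t ≤ 2 := fun t => by
    have := abs_le.1 (hQ t); constructor <;> simp only [hq] <;> linarith
  have hder : ∀ t, HasDerivAt q (τ - 2 * radPolyR (cP v) t 0) t := fun t =>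
    hasDerivAt_one_add_Q_zero h v t
  have hqc : Continuous q := continuous_iff_continuousAt.2 fun t => (hder t).continuousAt
  have hPc : Continuous fun t => radPolyR (cP v) t 0 := by
    have := continuous_cP v
    unfold radPolyR; fun_prop
  have hqne : ∀ t, q t ≠ 0 := fun t => by have := (hq1 t).1; positivity
  set I : ℝ := ∫ s in (0 : ℝ)..(2 * π), radPolyR (cP v) s 0 / q s with hI
  have hcast : (∫ s in (0 : ℝ)..(2 * π), Sfield v s 0) = (I : ℂ) := by
    rw [hI, ← intervalIntegral.integral_ofReal]
    refine intervalIntegral.integral_congr fun s _ => ?_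
    simp only [Sfield, ← Complex.ofReal_zero, radPoly_ofReal, hq]
    push_cast; rfl
  have hlog : ∫ s in (0 : ℝ)..(2 * π), (τ - 2 * radPolyR (cP v) s 0) / q s = 0 := by
    rw [intervalIntegral.integral_eq_sub_of_hasDerivAt
      (fun s _ => (hder s).log (hqne s))
      (Continuous.intervalIntegrable (by fun_prop (disch := exact hqne)) _ _)]
    have : q (2 * π) = q 0 := by
      have : ∀ p, cQ v p (2 * π) = cQ v p 0 := fun p => by simpa using cQ_periodic v p 0
      simp only [hq, radPolyR, this]
    rw [this, sub_self]
  have hIτ : 2 * I = τ * ∫ s in (0 : ℝ)..(2 * π), 1 / q s := by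
    have e : ∫ s in (0 : ℝ)..(2 * π), (τ - 2 * radPolyR (cP v) s 0) / q s
        = τ * (∫ s in (0 : ℝ)..(2 * π), 1 / q s) - 2 * I := by
      rw [hI, ← intervalIntegral.integral_const_mul, ← intervalIntegral.integral_const_mul,
        ← intervalIntegral.integral_sub
          (Continuous.intervalIntegrable (by fun_prop (disch := exact hqne)) _ _)
          (Continuous.intervalIntegrable (by fun_prop (disch := exact hqne)) _ _)]
      refine intervalIntegral.integral_congr fun s _ => ?_
      ring
    linarith
  have hlow : π ≤ ∫ s in (0 : ℝ)..(2 * π), 1 / q s := by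
    have : ∫ s in (0 : ℝ)..(2 * π), (1 / 2 : ℝ) ≤ ∫ s in (0 : ℝ)..(2 * π), 1 / q s := by
      refine intervalIntegral.integral_mono_on hπ (by simp)
        (Continuous.intervalIntegrable (by fun_prop (disch := exact hqne)) _ _) fun s _ => ?_
      have := hq1 s
      exact one_div_le_one_div_of_le (by linarith) this.2
    simp only [intervalIntegral.integral_const, smul_eq_mul, sub_zero] at this
    linarith
  have hIabs : |τ| * 3 ≤ 2 * |I| := by
    have e : |2 * I| = |τ| * |∫ s in (0 : ℝ)..(2 * π), 1 / q s| := by rw [hIτ, abs_mul]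
    rw [abs_mul, abs_two] at e
    rw [e]
    have h3 := Real.pi_gt_three
    exact mul_le_mul_of_nonneg_left (by
      rw [abs_of_nonneg (by linarith)]; linarith) (abs_nonneg _)
  have hI1 : |I| ≤ 1 / 10 := by
    have hS := radialField_Sfield hv hN hN'
    have := intervalIntegral.norm_integral_le_of_norm_le_const (a := 0) (b := 2 * π)
      (C := 2 * (N * Real.sqrt d)) (f := fun s => Sfield v s 0) (fun s _ => hS.bound s 0 (by simp))
    rw [hcast, Complex.norm_real, Real.norm_eq_abs, sub_zero, abs_of_nonneg hπ] at this
    have := hS.small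
    linarith
  rw [hcast, ← Complex.ofReal_exp, ← Complex.ofReal_one, ← Complex.ofReal_sub, Complex.norm_real,
    Real.norm_eq_abs]
  have hexp : 2 / 3 * |I| ≤ |Real.exp I - 1| := by
    rcases le_total 0 I with h0 | h0
    · have := Real.add_one_le_exp I
      rw [abs_of_nonneg h0, abs_of_nonneg (by linarith)]
      linarith
    · rw [abs_of_nonpos h0] at hI1 ⊢
      have h1 : Real.exp I * (1 - I) ≤ 1 := by
        have := Real.add_one_le_exp (-I)
        calc Real.exp I * (1 - I) ≤ Real.exp I * Real.exp (-I) := by gcongr; linarith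
          _ = 1 := by rw [← Real.exp_add]; simp
      rw [abs_sub_comm]
      refine le_trans ?_ (le_abs_self _)
      nlinarith
  linarith

/-! ### Periodic orbits as periodic radial solutions -/

lemma contDiff_vecField (d : ℕ) (v : CoefSpace d) : ContDiff ℝ 1 (vecField d v) := by
  unfold vecField Fpoly Gpoly; fun_prop

/-- The closed disc of radius `1/2`. -/
def halfDisc : Set (ℝ × ℝ) := {q | q.1 ^ 2 + q.2 ^ 2 ≤ 1 / 4}

lemma isCompact_halfDisc : IsCompact halfDisc := by
  refine (isCompact_closedBall (0 : ℝ × ℝ) 1).of_isClosed_subset ?_ fun q hq => ?_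
  · exact isClosed_le (by fun_prop) continuous_const
  · have hq' : q.1 ^ 2 + q.2 ^ 2 ≤ 1 / 4 := hq
    rw [mem_closedBall_zero_iff, Prod.norm_def, Real.norm_eq_abs, Real.norm_eq_abs]
    exact max_le (abs_le_one_iff_mul_self_le_one.2 (by nlinarith [sq_nonneg q.2]))
      (abs_le_one_iff_mul_self_le_one.2 (by nlinarith [sq_nonneg q.1]))

lemma solution_unique {X : ℝ × ℝ → ℝ × ℝ} (hX : ContDiff ℝ 1 X) {f g : ℝ → ℝ × ℝ}
    (hf : ∀ t, HasDerivAt f (X (f t)) t) (hg : ∀ t, HasDerivAt g (X (g t)) t)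
    (hfK : ∀ t, f t ∈ halfDisc) (hgK : ∀ t, g t ∈ halfDisc) {t₀ : ℝ} (h : f t₀ = g t₀) : f = g := by
  obtain ⟨K, hK⟩ := (hX.locallyLipschitz.locallyLipschitzOn
    (s := halfDisc)).exists_lipschitzOnWith_of_compact isCompact_halfDisc
  exact ODE_solution_unique_univ (v := fun _ => X) (s := fun _ => halfDisc) (K := K) (t₀ := t₀)
    (fun _ => hK) (fun t => ⟨hf t, hfK t⟩) (fun t => ⟨hg t, hgK t⟩) h

/-- Periodic orbits inside the disc that share a point coincide. -/
lemma periodicOrbit_unique {X : ℝ × ℝ → ℝ × ℝ} (hX : ContDiff ℝ 1 X) {Γ Γ' : Set (ℝ × ℝ)}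
    (h : IsPeriodicOrbit X Γ) (h' : IsPeriodicOrbit X Γ') (hK : Γ ⊆ halfDisc) (hK' : Γ' ⊆ halfDisc)
    {q : ℝ × ℝ} (hq : q ∈ Γ) (hq' : q ∈ Γ') : Γ = Γ' := by
  obtain ⟨f, T, -, hf, -, -, rfl⟩ := h
  obtain ⟨g, T', -, hg, -, -, rfl⟩ := h'
  obtain ⟨a, ha⟩ := hq
  obtain ⟨b, hb⟩ := hq'
  have e : f = fun t => g (t + (b - a)) := by
    refine solution_unique hX hf (fun t => (hg _).comp_add_const t (b - a))
      (fun t => hK ⟨t, rfl⟩) (fun t => hK' ⟨_, rfl⟩) (t₀ := a) ?_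
    simp [ha, hb]
  rw [e]
  ext q
  constructor
  · rintro ⟨t, rfl⟩; exact ⟨_, rfl⟩
  · rintro ⟨t, rfl⟩; exact ⟨t - (b - a), by simp⟩

lemma vecField_zero (d : ℕ) (v : CoefSpace d) : vecField d v (0, 0) = (0, 0) := by
  have h : ∀ p : ↥(coeffIdx d), (0 : ℝ) ^ (p : ℕ × ℕ).2 * (0 : ℝ) ^ (p : ℕ × ℕ).1 = 0 := by
    rintro ⟨⟨i, k⟩, hp⟩
    simp only [coeffIdx, Finset.mem_filter] at hp
    rw [← pow_add, zero_pow (by simp only; omega)]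
  simp [vecField, Fpoly, Gpoly, mul_assoc, h]

/-- The vector field in polar coordinates. -/
lemma Fpoly_polar {d : ℕ} (v : CoefSpace d) (r t : ℝ) :
    Real.cos t * Fpoly d v (r * Real.cos t) (r * Real.sin t)
      + Real.sin t * Gpoly d v (r * Real.cos t) (r * Real.sin t) = r * radPolyR (cP v) t r ∧
    Real.cos t * Gpoly d v (r * Real.cos t) (r * Real.sin t)
      - Real.sin t * Fpoly d v (r * Real.cos t) (r * Real.sin t) = r * radPolyR (cQ v) t r := by
  have hpow : ∀ p : ↥(coeffIdx d), (r * Real.cos t) ^ (p : ℕ × ℕ).2 * (r * Real.sin t) ^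
      (p : ℕ × ℕ).1 = r * (trigMono p t * r ^ ((p : ℕ × ℕ).1 + (p : ℕ × ℕ).2 - 1)) := by
    rintro ⟨⟨i, k⟩, hp⟩
    simp only [coeffIdx, Finset.mem_filter] at hp
    obtain ⟨m, hm⟩ : ∃ m, i + k = m + 1 := ⟨i + k - 1, by omega⟩
    simp only [trigMono, hm, Nat.add_sub_cancel, mul_pow]
    calc _ = r ^ (i + k) * (Real.cos t ^ k * Real.sin t ^ i) := by ring
      _ = _ := by rw [hm]; ring
  constructor
  · simp only [Fpoly, Gpoly, radPolyR, Finset.mul_sum, ← Finset.sum_add_distrib, mul_assoc, hpow,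
      cP]
    exact Finset.sum_congr rfl fun p _ => by ring
  · simp only [Fpoly, Gpoly, radPolyR, Finset.mul_sum, ← Finset.sum_sub_distrib, mul_assoc, hpow,
      cQ]
    exact Finset.sum_congr rfl fun p _ => by ring

/-- A nonvanishing solution has a continuous choice of polar coordinates, obtained by
integrating `z'/z`. -/
lemma exists_polar {d : ℕ} (v : CoefSpace d) {sol : ℝ → ℝ × ℝ}
    (hsol : ∀ t, HasDerivAt sol (vecField d v (sol t)) t) (hne : ∀ t, sol t ≠ (0, 0)) :
    ∃ r φ : ℝ → ℝ, (∀ t, 0 < r t) ∧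
      (∀ t, sol t = (r t * Real.cos (φ t), r t * Real.sin (φ t))) ∧
      (∀ t, HasDerivAt r (r t * radPolyR (cP v) (φ t) (r t)) t) ∧
      (∀ t, HasDerivAt φ (1 + radPolyR (cQ v) (φ t) (r t)) t) := by
  set z : ℝ → ℂ := fun t => (sol t).1 + (sol t).2 * Complex.I with hz
  set z' : ℝ → ℂ := fun t => (vecField d v (sol t)).1 + (vecField d v (sol t)).2 * Complex.I with hz'
  have hzd : ∀ t, HasDerivAt z (z' t) t := fun t => by
    have h1 : HasDerivAt (fun t => (sol t).1) _ t := (hsol t).fst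
    have h2 : HasDerivAt (fun t => (sol t).2) _ t := (hsol t).snd
    exact h1.ofReal_comp.add (h2.ofReal_comp.mul_const Complex.I)
  have hz0 : ∀ t, z t ≠ 0 := fun t h => by
    refine hne t (Prod.ext ?_ ?_)
    · simpa [hz] using congrArg Complex.re h
    · simpa [hz] using congrArg Complex.im h
  have hsc : Continuous sol := continuous_iff_continuousAt.2 fun t => (hsol t).continuousAt
  have hzc : Continuous z := continuous_iff_continuousAt.2 fun t => (hzd t).continuousAt
  have hz'c : Continuous z' := by
    have := (contDiff_vecField d v).continuous.comp hsc
    exact (Complex.continuous_ofReal.comp this.fst).add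
      ((Complex.continuous_ofReal.comp this.snd).mul continuous_const)
  have hc : Continuous fun t => z' t / z t := hz'c.div hzc hz0
  set ζ : ℝ → ℂ := fun t => Complex.log (z 0) + ∫ s in (0 : ℝ)..t, z' s / z s with hζ
  have hζd : ∀ t, HasDerivAt ζ (z' t / z t) t := fun t =>
    (hc.integral_hasStrictDerivAt 0 t).hasDerivAt.const_add _
  have hexp : ∀ t, z t = Complex.exp (ζ t) := by
    have hd : ∀ t, HasDerivAt (fun t => z t * Complex.exp (-ζ t)) 0 t := fun t => by
      refine ((hzd t).mul (hζd t).neg.cexp).congr_deriv ?_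
      have := hz0 t
      field_simp
      ring
    intro t
    have e := is_const_of_deriv_eq_zero (fun t => (hd t).differentiableAt)
      (fun t => (hd t).deriv) t 0
    have e0 : z 0 * Complex.exp (-ζ 0) = 1 := by
      simp only [hζ, intervalIntegral.integral_same, add_zero]
      rw [Complex.exp_neg, Complex.exp_log (hz0 0), mul_inv_cancel₀ (hz0 0)]
    rw [e0, Complex.exp_neg] at e
    exact (mul_inv_eq_one₀ (Complex.exp_ne_zero _)).1 e
  set r : ℝ → ℝ := fun t => Real.exp (ζ t).re with hr
  set φ : ℝ → ℝ := fun t => (ζ t).im with hφ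
  have hpolar : ∀ t, sol t = (r t * Real.cos (φ t), r t * Real.sin (φ t)) := fun t => by
    have h := hexp t
    refine Prod.ext ?_ ?_
    · have := congrArg Complex.re h
      rw [Complex.exp_re] at this
      simpa [hz] using this
    · have := congrArg Complex.im h
      rw [Complex.exp_im] at this
      simpa [hz] using this
  have hr0 : ∀ t, 0 < r t := fun t => Real.exp_pos _
  have hquot : ∀ t, z' t / z t = (radPolyR (cP v) (φ t) (r t) : ℝ) +
      (1 + radPolyR (cQ v) (φ t) (r t) : ℝ) * Complex.I := fun t => by
    rw [div_eq_iff (hz0 t)]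
    obtain ⟨h1, h2⟩ := Fpoly_polar v (r t) (φ t)
    have e1 : (sol t).1 = r t * Real.cos (φ t) := by rw [hpolar t]
    have e2 : (sol t).2 = r t * Real.sin (φ t) := by rw [hpolar t]
    have hcs := Real.sin_sq_add_cos_sq (φ t)
    simp only [hz', hz, vecField, e1, e2]
    generalize Fpoly d v (r t * Real.cos (φ t)) (r t * Real.sin (φ t)) = F at *
    generalize Gpoly d v (r t * Real.cos (φ t)) (r t * Real.sin (φ t)) = G at *
    generalize radPolyR (cP v) (φ t) (r t) = P at *
    generalize radPolyR (cQ v) (φ t) (r t) = Q at *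
    generalize Real.cos (φ t) = c at *
    generalize Real.sin (φ t) = s at *
    apply Complex.ext
    · simp
      linear_combination (-F) * hcs - s * h2 + c * h1
    · simp
      linear_combination (-G) * hcs + s * h1 + c * h2
  refine ⟨r, φ, hr0, hpolar, fun t => ?_, fun t => ?_⟩
  · have h : HasDerivAt (fun t => (ζ t).re) (z' t / z t).re t :=
      Complex.reCLM.hasFDerivAt.comp_hasDerivAt t (hζd t)
    refine h.exp.congr_deriv ?_
    rw [hquot]; simp [hr]
  · have h : HasDerivAt (fun t => (ζ t).im) (z' t / z t).im t :=
      Complex.imCLM.hasFDerivAt.comp_hasDerivAt t (hζd t)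
    refine h.congr_deriv ?_
    rw [hquot]; simp

/-- A solution of a `2π`-periodic radial equation that closes up after `m` turns closes up after
one turn: the difference of two consecutive turns never changes sign. -/
lemma RadialField.closes_up {S : ℝ → ℂ → ℂ} {DD : ℝ → ℂ → ℂ → ℂ} {κ : ℝ} (hS : RadialField S DD κ)
    (hper : ∀ t a, S (t + 2 * π) a = S t a) {w : ℝ → ℝ}
    (hw : ∀ t, HasDerivAt (fun t => (w t : ℂ)) (w t * S t (w t)) t) (hw1 : ∀ t, |w t| ≤ 1)
    {m : ℕ} (hm : 1 ≤ m) (hwm : w (2 * π * m) = w 0) : w (2 * π) = w 0 := by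
  have hL : (0 : ℝ) ≤ 2 * π * m := by positivity
  have hu : IsRadialSol S (2 * π * m) fun t => (w t : ℂ) := fun t _ =>
    ⟨(hw t).hasDerivWithinAt, by simpa using hw1 t⟩
  have hu' : IsRadialSol S (2 * π * m) fun t => (w (t + 2 * π) : ℂ) := fun t _ => by
    refine ⟨?_, by simpa using hw1 _⟩
    have := (hw (t + 2 * π)).comp_add_const t (2 * π)
    rw [hper] at this
    exact this.hasDerivWithinAt
  have hkey := hS.sub_eq_mul_exp hL hu' hu
  set D : ℝ → ℝ := fun t => w (t + 2 * π) - w t with hD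
  have hwc : Continuous w := by
    have : Continuous fun t => (w t : ℂ) :=
      continuous_iff_continuousAt.2 fun t => (hw t).continuousAt
    simpa [Function.comp_def] using Complex.continuous_re.comp this
  have hDc : Continuous D := by fun_prop
  have hsum : ∑ j ∈ Finset.range m, D (2 * π * j) = 0 := by
    have := Finset.sum_range_sub (fun j : ℕ => w (2 * π * j)) m
    simp only [Nat.cast_zero, mul_zero, hwm, sub_self] at this
    rw [← this]
    refine Finset.sum_congr rfl fun j _ => ?_
    simp only [hD]; congr 2; push_cast; ring
  have hne : (Finset.range m).Nonempty := Finset.nonempty_range_iff.2 (by omega)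
  have hmem : ∀ j ∈ Finset.range m, 2 * π * (j : ℝ) ∈ Set.Icc 0 (2 * π * m) := fun j hj => by
    have : (j : ℝ) ≤ m := by exact_mod_cast (Finset.mem_range.1 hj).le
    exact ⟨by positivity, by gcongr⟩
  obtain ⟨i, hi, hi0⟩ : ∃ i ∈ Finset.range m, D (2 * π * i) ≤ 0 := by
    by_contra! h
    exact (Finset.sum_pos h hne).ne' hsum
  obtain ⟨j, hj, hj0⟩ : ∃ i ∈ Finset.range m, 0 ≤ D (2 * π * i) := by
    by_contra! h
    exact (Finset.sum_neg h hne).ne hsum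
  obtain ⟨t, ht, ht0⟩ := isPreconnected_Icc.intermediate_value (hmem i hi) (hmem j hj)
    hDc.continuousOn ⟨hi0, hj0⟩
  have h := hkey t ht
  rw [← Complex.ofReal_sub, show w (t + 2 * π) - w t = 0 from ht0, Complex.ofReal_zero, eq_comm,
    mul_eq_zero, or_iff_left (Complex.exp_ne_zero _), sub_eq_zero, Complex.ofReal_inj,
    zero_add] at h
  exact h

lemma Sfield_periodic {d : ℕ} (v : CoefSpace d) (t : ℝ) (a : ℂ) :
    Sfield v (t + 2 * π) a = Sfield v t a := by
  simp only [Sfield, radPoly, cP_periodic, cQ_periodic]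

/-- Every periodic orbit in the disc of radius `1/2` crosses the positive `x`-axis at a point
`(ρ, 0)` from which the radial equation has a solution that closes up after one turn. -/
lemma exists_radial_of_orbit {d : ℕ} {N : ℝ} {v : CoefSpace d} (hv : ‖v‖ ≤ N)
    (hN : N * Real.sqrt d ≤ 1 / (40 * π)) (hN' : N * Real.sqrt d ≤ 1 / 100) {Γ : Set (ℝ × ℝ)}
    (hΓ : IsPeriodicOrbit (vecField d v) Γ) (hΓD : Γ ⊆ halfDisc) :
    ∃ ρ : ℝ, 0 < ρ ∧ ρ ≤ 1 / 2 ∧ (ρ, 0) ∈ Γ ∧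
      ∃ u : ℝ → ℂ, u 0 = ρ ∧ IsRadialSol (Sfield v) (2 * π) u ∧ u (2 * π) = ρ := by
  have hS := radialField_Sfield hv hN hN'
  obtain ⟨sol, T, hT, hsol, hper, ⟨t₁, t₂, hne⟩, rfl⟩ := hΓ
  have hdisc : ∀ t, sol t ∈ halfDisc := fun t => hΓD ⟨t, rfl⟩
  have hnz : ∀ t, sol t ≠ (0, 0) := fun t ht => by
    have := solution_unique (contDiff_vecField d v) hsol (g := fun _ => (0, 0))
      (fun t => (hasDerivAt_const t ((0, 0) : ℝ × ℝ)).congr_deriv (vecField_zero d v).symm) hdisc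
      (fun t => by simp [halfDisc]) (t₀ := t) ht
    exact hne (by rw [this])
  obtain ⟨r, φ, hr0, hpol, hr, hφ⟩ := exists_polar v hsol hnz
  have hrsq : ∀ t, r t ^ 2 = (sol t).1 ^ 2 + (sol t).2 ^ 2 := fun t => by
    rw [hpol t]
    linear_combination (-(r t ^ 2)) * Real.sin_sq_add_cos_sq (φ t)
  have hrhalf : ∀ t, r t ≤ 1 / 2 := fun t => by
    have h : (sol t).1 ^ 2 + (sol t).2 ^ 2 ≤ 1 / 4 := hdisc t
    rw [← hrsq] at h
    nlinarith [hr0 t]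
  have hrT : ∀ t, r (t + T) = r t := fun t => by
    have : r (t + T) ^ 2 = r t ^ 2 := by rw [hrsq, hrsq, hper]
    exact (pow_left_inj₀ (hr0 _).le (hr0 _).le two_ne_zero).1 this
  have hQ : ∀ t, 1 / 2 ≤ 1 + radPolyR (cQ v) (φ t) (r t) := fun t => by
    have h := norm_Q_le hv (φ t) (r t)
      (by rw [Complex.norm_real, Real.norm_eq_abs, abs_of_pos (hr0 t)]; linarith [hrhalf t])
    rw [radPoly_ofReal, Complex.norm_real, Real.norm_eq_abs] at h
    linarith [(abs_le.1 h).1]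
  have hφc : Continuous φ := continuous_iff_continuousAt.2 fun t => (hφ t).continuousAt
  -- the angle grows at speed at least `1/2`, so it is a bijection of the line
  have hφmono : Monotone fun t => φ t - 1 / 2 * t :=
    monotone_of_hasDerivAt_nonneg (f' := fun t => 1 + radPolyR (cQ v) (φ t) (r t) - 1 / 2)
      (fun t => ((hφ t).sub ((hasDerivAt_id t).const_mul (1 / 2 : ℝ))).congr_deriv (by ring))
      fun t => by simpa using hQ t
  have hφs : StrictMono φ := fun a b hab => by
    have := hφmono hab.le
    simp only at this
    linarith
  have htop : Tendsto φ atTop atTop := by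
    refine tendsto_atTop_mono' atTop (f₁ := fun t => 1 / 2 * t + φ 0) ?_
      (tendsto_atTop_add_const_right _ _ (tendsto_id.const_mul_atTop (r := (1 / 2 : ℝ)) (by norm_num)))
    filter_upwards [eventually_ge_atTop 0] with t ht
    have := hφmono ht
    simp only at this
    linarith
  have hbot : Tendsto φ atBot atBot := by
    refine tendsto_atBot_mono' atBot (f₁ := fun t => 1 / 2 * t + φ 0) ?_
      (tendsto_atBot_add_const_right _ _ (tendsto_id.const_mul_atBot (r := (1 / 2 : ℝ)) (by norm_num)))
    filter_upwards [eventually_le_atBot 0] with t ht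
    have := hφmono ht
    simp only at this
    linarith
  set e := hφs.orderIsoOfSurjective φ (hφc.surjective htop hbot) with he
  set τ : ℝ → ℝ := fun s => e.symm s with hτ
  have hφτ : ∀ s, φ (τ s) = s := fun s => e.apply_symm_apply s
  have hτφ : ∀ t, τ (φ t) = t := fun t => e.symm_apply_apply t
  have hτd : ∀ s, HasDerivAt τ (1 + radPolyR (cQ v) s (r (τ s)))⁻¹ s := fun s => by
    have h1 := hφ (τ s)
    have h2 := hQ (τ s)
    rw [hφτ] at h1 h2
    exact h1.of_local_left_inverse e.symm.continuous.continuousAt (by linarith)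
      (Eventually.of_forall hφτ)
  set w : ℝ → ℝ := fun s => r (τ s) with hw
  have hwd : ∀ s, HasDerivAt (fun s => (w s : ℂ)) (w s * Sfield v s (w s)) s := fun s => by
    have h1 := hr (τ s)
    rw [hφτ] at h1
    refine (h1.comp s (hτd s)).ofReal_comp.congr_deriv ?_
    simp only [Sfield, radPoly_ofReal, hw]
    push_cast
    rw [mul_assoc, div_eq_mul_inv]
  have hw1 : ∀ s, |w s| ≤ 1 := fun s => by
    rw [abs_of_pos (hr0 _)]; exact (hrhalf _).trans (by norm_num)
  -- the period advances the angle by `2πm`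
  obtain ⟨m, hm, hmT⟩ : ∃ m : ℕ, 1 ≤ m ∧ φ (τ 0 + T) = 2 * π * m := by
    have h1 : sol (τ 0 + T) = sol (τ 0) := hper _
    rw [hpol, hpol (τ 0), hrT, hφτ] at h1
    have h2 : Real.cos (φ (τ 0 + T)) = 1 := by
      have := congrArg Prod.fst h1
      simpa using mul_left_cancel₀ (hr0 _).ne' this
    obtain ⟨n, hn⟩ := (Real.cos_eq_one_iff _).1 h2
    have h3 : 0 < φ (τ 0 + T) := by
      have := hφs (show τ 0 < τ 0 + T by linarith)
      rwa [hφτ] at this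
    have h4 : 0 < n := by
      rw [← hn] at h3
      have := pos_of_mul_pos_left h3 (by positivity)
      exact_mod_cast this
    refine ⟨n.toNat, by omega, ?_⟩
    have h5 : ((n.toNat : ℕ) : ℝ) = n := by
      exact_mod_cast congrArg (Int.cast : ℤ → ℝ) (Int.toNat_of_nonneg h4.le)
    rw [h5, ← hn]; ring
  have hwm : w (2 * π * m) = w 0 := by
    simp only [hw]
    rw [← hmT, hτφ, hrT]
  have hclose := hS.closes_up (Sfield_periodic v) hwd hw1 hm hwm
  refine ⟨w 0, hr0 _, hrhalf _, ⟨τ 0, ?_⟩, fun s => w s, rfl, fun s _ =>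
    ⟨(hwd s).hasDerivWithinAt, by simpa using hw1 s⟩, by simp only [hclose]⟩
  rw [hpol, hφτ]
  simp [hw]

/-! ### The measure estimate -/

/-- The orbits give distinct zeros of the displacement function, whose value at the origin is
controlled from below by the trace and from above by the number of its zeros. -/
lemma abs_trace_le_of_count {d : ℕ} (hd : 1 ≤ d) {N : ℝ} {v : CoefSpace d} (hv : ‖v‖ ≤ N)
    (hN : N * Real.sqrt d ≤ 1 / (40 * π)) (hN' : N * Real.sqrt d ≤ 1 / 100) {n : ℕ}
    (hn : (n : ℝ≥0∞) ≤ limitCycleCount d v) :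
    |traceForm (proj d v)| ≤ 8 * π * (N * Real.sqrt d) * (2 / 3) ^ n := by
  obtain ⟨D, hD, hDb, hD0, hDz⟩ := (radialField_Sfield hv hN hN').exists_displacement
  rw [limitCycleCount, ← ENat.toENNReal_coe, ENat.toENNReal_le] at hn
  obtain ⟨B, hBA, hBn⟩ := Set.exists_subset_encard_eq hn
  have hB : ∀ Γ ∈ B, ∃ ρ : ℝ, (0 < ρ ∧ ρ ≤ 1 / 2 ∧ D ρ = 0) ∧ (ρ, 0) ∈ Γ := fun Γ hΓ => by
    obtain ⟨ρ, h0, h1, h2, u, hu0, hu, hu1⟩ :=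
      exists_radial_of_orbit hv hN hN' (hBA hΓ).1.1 (hBA hΓ).2
    refine ⟨ρ, ⟨h0, h1, hDz ρ ?_ ?_ u hu0 hu hu1⟩, h2⟩
    · rw [mem_ball_zero_iff, Complex.norm_real, Real.norm_eq_abs, abs_of_pos h0]; linarith
    · exact_mod_cast h0.ne'
  choose! ρ hρ hρΓ using hB
  have hinj : Set.InjOn ρ B := fun Γ hΓ Γ' hΓ' h =>
    periodicOrbit_unique (contDiff_vecField d v) (hBA hΓ).1.1 (hBA hΓ').1.1 (hBA hΓ).2 (hBA hΓ').2
      (hρΓ Γ hΓ) (h ▸ hρΓ Γ' hΓ')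
  have hcard : (ρ '' B).encard = n := by rw [hinj.encard_image, hBn]
  have hfin : (ρ '' B).Finite := Set.finite_of_encard_eq_coe hcard
  have hcard' : hfin.toFinset.card = n := by
    rw [hfin.encard_eq_coe_toFinset_card] at hcard
    exact_mod_cast hcard
  have h1 := norm_le_of_zeros hD hDb hfin.toFinset (by
    simp only [Set.Finite.mem_toFinset, Set.forall_mem_image]
    exact hρ)
  rw [hcard', hD0] at h1
  refine (abs_trace_le hd hv hN hN').trans (h1.trans_eq ?_)
  ring

lemma norm_proj_le {d : ℕ} (hd : 1 ≤ d) (v : CoefSpace d) : ‖proj d v‖ ≤ ‖v‖ := by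
  refine le_of_sq_le_sq ?_ (norm_nonneg _)
  rw [← sum_sq_eq_norm_sq, EuclideanSpace.real_norm_sq_eq, Fin.sum_univ_four]
  have hne : (⟨(0, 1), mem_coeffIdx_01 hd⟩ : ↥(coeffIdx d)) ≠ ⟨(1, 0), mem_coeffIdx_10 hd⟩ := by
    simp
  have h := Finset.sum_le_sum_of_subset_of_nonneg
    (Finset.subset_univ {⟨(0, 1), mem_coeffIdx_01 hd⟩, ⟨(1, 0), mem_coeffIdx_10 hd⟩})
    (f := fun p : ↥(coeffIdx d) => v (Sum.inl p) ^ 2 + v (Sum.inr p) ^ 2)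
    fun _ _ _ => by positivity
  rw [Finset.sum_pair hne] at h
  refine le_trans (le_of_eq ?_) h
  simp [proj, dif_pos hd]
  ring

/-- Since `π(V)` fills a proportion `1/δ` of the ball, it is not contained in a thin slab around
the hyperplane of zero trace. -/
lemma exists_large_trace {d : ℕ} (hd : 1 ≤ d) {N : ℝ} (hN : 0 < N) {V : Set (CoefSpace d)}
    (hV : V ⊆ ball 0 N) {δ : ℝ} (hδ : 1 ≤ δ)
    (h : volume (ball (0 : EuclideanSpace ℝ (Fin 4)) N)
      ≤ ENNReal.ofReal δ * volume (proj d '' V)) :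
    ∃ p ∈ V, N / (240 * δ) ≤ |traceForm (proj d p)| := by
  by_contra! hlt
  set B := ball (0 : EuclideanSpace ℝ (Fin 4)) N with hB
  have hsub : proj d '' V ⊆ {w ∈ B | |traceForm w| ≤ N / (240 * δ)} := by
    rintro _ ⟨p, hp, rfl⟩
    refine ⟨?_, (hlt p hp).le⟩
    have := hV hp
    rw [mem_ball_zero_iff] at this
    rw [hB, mem_ball_zero_iff]
    exact (norm_proj_le hd p).trans_lt this
  have hslab := slab_measure_le (volume : Measure (EuclideanSpace ℝ (Fin 4))) 4
    (fun p θ hθ S => by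
      rw [Measure.addHaar_image_homothety, finrank_euclideanSpace_fin, abs_of_pos (by positivity)])
    traceForm (convex_ball 0 N) (p := EuclideanSpace.single 0 (N / 2)) (c := N / 2)
    (ε := N / (240 * δ))
    (by rw [mem_ball_zero_iff, PiLp.norm_single, Real.norm_eq_abs,
          abs_of_pos (by positivity)]; linarith)
    (by positivity) (by positivity) (by simp [traceForm, le_abs_self])
  have hB0 : volume B ≠ 0 := (measure_ball_pos _ _ hN).ne'
  have hBtop : volume B ≠ ⊤ := measure_ball_lt_top.ne
  have hfin : volume B ≤ ENNReal.ofReal (1 / 2) * volume B := by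
    calc volume B ≤ ENNReal.ofReal δ *
          (ENNReal.ofReal (12 * ((4 : ℕ) + 1) * (N / (240 * δ)) / (N / 2)) * volume B) := by
          refine h.trans ?_
          gcongr
          exact (measure_mono hsub).trans hslab
      _ = ENNReal.ofReal (1 / 2) * volume B := by
          rw [← mul_assoc, ← ENNReal.ofReal_mul (by linarith)]
          congr 2
          field_simp
          norm_num
  have hlt' : ENNReal.ofReal (1 / 2) * volume B < 1 * volume B := by
    rw [ENNReal.mul_lt_mul_iff_left hB0 hBtop]
    exact ENNReal.ofReal_lt_one.2 (by norm_num)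
  rw [one_mul] at hlt'
  exact absurd hfin (not_le.2 hlt')

lemma natCeil_le_toENNReal {T : ℝ} {a : ℕ∞} (h : ENNReal.ofReal T ≤ (a : ℝ≥0∞)) :
    ((⌈T⌉₊ : ℕ) : ℝ≥0∞) ≤ (a : ℝ≥0∞) := by
  induction a using ENat.recTopCoe with
  | top => simp
  | coe m =>
    rw [ENat.toENNReal_coe] at h ⊢
    have : T ≤ m := by
      rw [← ENNReal.ofReal_natCast] at h
      exact (ENNReal.ofReal_le_ofReal_iff (by positivity)).1 h
    exact_mod_cast Nat.ceil_le.2 this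

lemma finrank_vectorSpan_le {d : ℕ} (hd : 2 ≤ d) (V : Set (CoefSpace d)) :
    (Module.finrank ℝ ↥(vectorSpan ℝ V) : ℝ) + 1 ≤ 5 * (d : ℝ) ^ 2 := by
  have h1 : Module.finrank ℝ ↥(vectorSpan ℝ V) ≤ 2 * (d + 1) ^ 2 := by
    refine (Submodule.finrank_le _).trans ?_
    rw [finrank_euclideanSpace, Fintype.card_sum, Fintype.card_coe]
    have : (coeffIdx d).card ≤ (d + 1) ^ 2 := by
      refine (Finset.card_filter_le _ _).trans ?_
      simp [sq]
    omega
  have h2 : (2 : ℝ) ≤ d := by exact_mod_cast hd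
  have h3 : (Module.finrank ℝ ↥(vectorSpan ℝ V) : ℝ) ≤ 2 * (d + 1) ^ 2 := by exact_mod_cast h1
  nlinarith

lemma two_thirds_pow_le {T : ℝ} {n : ℕ} (h : T ≤ n) :
    (2 / 3 : ℝ) ^ n ≤ Real.exp (-(Real.log (3 / 2) * T)) := by
  have hlog : 0 ≤ Real.log (3 / 2) := Real.log_nonneg (by norm_num)
  have e : (2 / 3 : ℝ) = Real.exp (-Real.log (3 / 2)) := by
    rw [Real.exp_neg, Real.exp_log (by norm_num)]; norm_num
  rw [e, ← Real.exp_nat_mul]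
  gcongr
  nlinarith

/-- there are absolute constants `C₁, C₂, C₃ > 0` such that for `d ≥ 2`,
`N ≤ 1/(40π√d)`, and a convex set `V ⊆ E(s,N)` of real dimension `k` with
`|E(4,N)| ≤ δ |π(V)|`, `δ ≥ 1`, one has for every `T ≥ 0`
`|{v ∈ V : C(v) ≥ T}| ≤ C₁ δ d^{C₂} e^{-C₃ T} |V|`, the measure being the
`k`-dimensional Hausdorff measure. -/
theorem statement3 :
    ∃ C₁ C₂ C₃ : ℝ, 0 < C₁ ∧ 0 < C₂ ∧ 0 < C₃ ∧
      ∀ d : ℕ, 2 ≤ d → ∀ N : ℝ, N ≤ 1 / (40 * π * Real.sqrt d) →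
      ∀ V : Set (CoefSpace d), Convex ℝ V → V ⊆ ball 0 N →
      ∀ k : ℕ, Module.finrank ℝ ↥(vectorSpan ℝ V) = k →
      ∀ δ : ℝ, 1 ≤ δ →
        0 < volume (proj d '' V) →
        volume (ball (0 : EuclideanSpace ℝ (Fin 4)) N)
          ≤ ENNReal.ofReal δ * volume (proj d '' V) →
      ∀ T : ℝ, 0 ≤ T →
        μH[k] {v ∈ V | ENNReal.ofReal T ≤ limitCycleCount d v}
          ≤ ENNReal.ofReal (C₁ * δ * (d : ℝ) ^ C₂ * Real.exp (-(C₃ * T))) * μH[k] V := by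

  refine ⟨115200 * π, 3, Real.log (3 / 2), by positivity, by norm_num,
    Real.log_pos (by norm_num), ?_⟩
  intro d hd N hN V hV hVN k hk δ hδ hpos hvol T hT
  have hd1 : 1 ≤ d := by omega
  have hd1' : (1 : ℝ) ≤ d := by exact_mod_cast hd1
  have hN0 : 0 < N := by
    obtain ⟨p, hp⟩ : V.Nonempty := by
      by_contra h
      rw [Set.not_nonempty_iff_eq_empty] at h
      simp [h] at hpos
    exact pos_of_mem_ball (hVN hp)
  have hs0 : 0 < Real.sqrt d := Real.sqrt_pos.2 (by linarith)
  have hNd : N * Real.sqrt d ≤ 1 / (40 * π) := by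
    rw [le_div_iff₀ (by positivity)] at hN ⊢
    linarith
  have hNd' : N * Real.sqrt d ≤ 1 / 100 :=
    hNd.trans (one_div_le_one_div_of_le (by norm_num) (by linarith [Real.pi_gt_three]))
  obtain ⟨p, hp, hpc⟩ := exists_large_trace hd1 hN0 hVN hδ hvol
  -- the trace, as a linear form on the coefficient space
  set ℓ : CoefSpace d →L[ℝ] ℝ := EuclideanSpace.proj (Sum.inl ⟨(0, 1), mem_coeffIdx_01 hd1⟩)
    + EuclideanSpace.proj (Sum.inr ⟨(1, 0), mem_coeffIdx_10 hd1⟩) with hℓ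
  have hℓv : ∀ v, ℓ v = traceForm (proj d v) := fun v => by
    rw [traceForm_proj hd1]; simp [hℓ]
  set ε : ℝ := 8 * π * (N * Real.sqrt d) * Real.exp (-(Real.log (3 / 2) * T)) with hε
  have hsub : {v ∈ V | ENNReal.ofReal T ≤ limitCycleCount d v} ⊆ {v ∈ V | |ℓ v| ≤ ε} := by
    rintro v ⟨hv, hvT⟩
    refine ⟨hv, ?_⟩
    rw [hℓv]
    refine (abs_trace_le_of_count hd1 (mem_ball_zero_iff.1 (hVN hv)).le hNd hNd'
      (natCeil_le_toENNReal hvT)).trans ?_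
    rw [hε]
    gcongr
    exact two_thirds_pow_le (Nat.le_ceil T)
  have hslab := slab_measure_le (μH[k] : Measure (CoefSpace d)) k (fun p θ hθ S => by
      rw [hausdorffMeasure_homothety_image (Nat.cast_nonneg k) p hθ.ne', ENNReal.smul_def,
        smul_eq_mul]
      congr 1
      rw [NNReal.rpow_natCast, ENNReal.coe_pow, ENNReal.ofReal_pow hθ.le, ← enorm_eq_nnnorm,
        Real.enorm_of_nonneg hθ.le])
    ℓ hV hp (c := N / (240 * δ)) (ε := ε) (by positivity) (by positivity) (by rwa [hℓv])
  refine (measure_mono hsub).trans (hslab.trans ?_)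
  gcongr
  have hk' : (k : ℝ) + 1 ≤ 5 * (d : ℝ) ^ 2 := hk ▸ finrank_vectorSpan_le hd V
  have hsd : Real.sqrt d ≤ d := Real.sqrt_le_self_iff.2 (Or.inr hd1')
  have h3 : (d : ℝ) ^ (3 : ℝ) = (d : ℝ) ^ 2 * d := by
    rw [show (3 : ℝ) = ((3 : ℕ) : ℝ) by norm_num, Real.rpow_natCast]; ring
  calc 12 * ((k : ℝ) + 1) * ε / (N / (240 * δ))
      = 23040 * π * δ * ((k + 1) * Real.sqrt d) * Real.exp (-(Real.log (3 / 2) * T)) := by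
        rw [hε]; field_simp; ring
    _ ≤ 23040 * π * δ * (5 * (d : ℝ) ^ 2 * d) * Real.exp (-(Real.log (3 / 2) * T)) := by
        gcongr
    _ = _ := by rw [h3]; ring
end

section
/- Let s ≥ 1, R > 1, 0 < ρ < 1, and let f = {f_v : v ∈ B(s,R)} be a family of functions holomorphic on 𝔻₁ depending holomorphically on v (i.e., (v,z) ↦ f_v(z) is holomorphic on B(s,R) × 𝔻₁), and set f₀(v) := f_v(0). Let V ⊂ B(s,1) ⊂ ℂ^s (identified with ℝ^{2s}) be a bounded convex set of real dimension k with 0 < H^k(V) < ∞, where H^k is k-dimensional Hausdorff measure. Suppose M₁ < ∞ and M₂ > 0 satisfy sup_{v∈V} sup_{z∈𝔻₁} |f_v(z)| ≤ M₁ and sup_{v∈V} |f₀(v)| ≥ M₂. Suppose D > 0 is a constant such that for every measurable subset ω ⊆ V one has sup_V |f₀| ≤ (4k·H^k(V)/H^k(ω))^D · sup_ω |f₀| (the defining property of the Chebyshev degree of f₀). Then for every T ≥ 0, H^k({v ∈ V : 𝒩_{f,ρ}(v) ≥ T}) ≤ 4k (M₁/M₂)^{1/D} · e^{−(log(1/ρ)/D)·T}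 · H^k(V). -/
/-!
If `g` is holomorphic on the unit disk, bounded by `M₁`, and has `n` zeros in the closed disk of
radius `ρ`, then dividing out Blaschke factors and applying the maximum principle gives
`‖g 0‖ ≤ M₁ * ρ ^ n` (`norm_le_mul_pow_of_zeros`). Hence every `v ∈ V` with at least `T` zeros lies
in the sublevel set `{‖f v 0‖ ≤ M₁ * ρ ^ T}`, and the Remez-type inequality applied to that sublevel
set, solved for its measure, is the claimed bound.

The Remez-type inequality concerns Borel sets only, while a convex set need not be Borel. The
relative interior of `V` is Borel and, the frontier of a convex set being Haar-null, has full
`k`-dimensional Hausdorff measure in `V` (`exists_measurable_subset_of_convex`); so the sublevel set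
is taken inside the relative interior.
-/

open MeasureTheory Metric
open scoped ENNReal NNReal Real

/-- `𝒩_{f,ρ}(v)`: the number of zeros of `g` in the closed disk of radius `ρ`
(valued in `ℝ≥0∞`; it equals `⊤` when `g` vanishes identically on the unit disk,
since then the zero set is infinite). -/
noncomputable def numZeros (g : ℂ → ℂ) (ρ : ℝ) : ℝ≥0∞ :=
  (({z : ℂ | z ∈ closedBall (0 : ℂ) ρ ∧ g z = 0}).encard : ℕ∞)

noncomputable instance {s : ℕ} : MeasurableSpace (EuclideanSpace ℂ (Fin s)) :=
  borel _

instance {s : ℕ} : BorelSpace (EuclideanSpace ℂ (Fin s)) := ⟨rfl⟩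

/-- Maximum principle after removal of the zeros in `S` by Blaschke factors of the disk of radius
`r`. Since `r < 1`, the circle lies inside the domain and no boundary behaviour enters. -/
lemma norm_le_mul_pow_of_sphere (r ρ M : ℝ) (hr1 : r < 1) (hρ0 : 0 < ρ) (hρr : ρ < r)
    (S : Finset ℂ) : ∀ g : ℂ → ℂ, DifferentiableOn ℂ g (ball 0 1) →
      (∀ z ∈ sphere (0 : ℂ) r, ‖g z‖ ≤ M) → (∀ a ∈ S, ‖a‖ ≤ ρ ∧ g a = 0) →
      ‖g 0‖ ≤ M * (ρ / r) ^ S.card := by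
  have hr0 : 0 < r := hρ0.trans hρr
  induction S using Finset.induction_on with
  | empty =>
    intro g hg hM _
    have hsub : closedBall (0 : ℂ) r ⊆ ball 0 1 := closedBall_subset_ball hr1
    have hd : DiffContOnCl ℂ g (ball 0 r) := by
      apply DifferentiableOn.diffContOnCl
      rw [closure_ball _ hr0.ne']
      exact hg.mono hsub
    have := Complex.norm_le_of_forall_mem_frontier_norm_le isBounded_ball hd
      (C := M) (by rw [frontier_ball _ hr0.ne']; exact hM)
      (subset_closure (mem_ball_self hr0))
    simpa using this
  | insert a S haS ih =>
    intro g hg hM hz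
    obtain ⟨haρ, hga⟩ := hz a (Finset.mem_insert_self _ _)
    have ha1 : ball (0 : ℂ) 1 ∈ nhds a :=
      isOpen_ball.mem_nhds (by rw [mem_ball_zero_iff]; linarith)
    have hfac : ∀ z, g z = (z - a) * dslope g a z := by
      intro z
      have := sub_smul_dslope g a z
      rw [hga, sub_zero, smul_eq_mul] at this
      exact this.symm
    -- the quotient of `g` by the Blaschke factor `r (z - a) / (r ^ 2 - conj a * z)`
    let h : ℂ → ℂ := fun z => dslope g a z * (((r : ℂ) ^ 2 - (starRingEnd ℂ) a * z) / r)
    have hh : DifferentiableOn ℂ h (ball 0 1) := by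
      apply DifferentiableOn.mul ((Complex.differentiableOn_dslope ha1).2 hg)
      fun_prop
    have hhM : ∀ z ∈ sphere (0 : ℂ) r, ‖h z‖ ≤ M := by
      intro z hzr
      have hzn : ‖z‖ = r := by simpa using hzr
      -- `r ^ 2 = z * conj z` on the circle, so the Blaschke factor has modulus one there
      have e1 : (r : ℂ) ^ 2 - (starRingEnd ℂ) a * z = z * (starRingEnd ℂ) (z - a) := by
        have : z * (starRingEnd ℂ) z = (r : ℂ) ^ 2 := by
          rw [Complex.mul_conj, Complex.normSq_eq_norm_sq, hzn]; push_cast; rfl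
        rw [map_sub, mul_sub, this]; ring
      have e2 : ‖h z‖ = ‖g z‖ := by
        have hn : ‖(r : ℂ)‖ = r := by simp [abs_of_pos hr0]
        simp only [h]
        rw [e1, hfac z, norm_mul, norm_div, norm_mul, norm_mul, RCLike.norm_conj, hzn, hn]
        field_simp
      rw [e2]; exact hM z hzr
    have hhz : ∀ b ∈ S, ‖b‖ ≤ ρ ∧ h b = 0 := by
      intro b hb
      obtain ⟨hbρ, hgb⟩ := hz b (Finset.mem_insert_of_mem hb)
      refine ⟨hbρ, ?_⟩
      have hba : b - a ≠ 0 := sub_ne_zero.2 (fun e => haS (e ▸ hb))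
      have hd : dslope g a b = 0 := by
        have := hfac b
        rw [hgb] at this
        exact (mul_eq_zero.1 this.symm).resolve_left hba
      simp [h, hd]
    have key := ih h hh hhM hhz
    have h0 : ‖g 0‖ = ‖h 0‖ * (‖a‖ / r) := by
      have hn : ‖(r : ℂ)‖ = r := by simp [abs_of_pos hr0]
      simp only [h]
      rw [hfac 0, norm_mul, norm_mul, norm_div, zero_sub, norm_neg, mul_zero, sub_zero, norm_pow,
        hn]
      field_simp
    rw [h0, Finset.card_insert_of_notMem haS, pow_succ, ← mul_assoc]
    have : ‖a‖ / r ≤ ρ / r := by gcongr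
    exact mul_le_mul key this (by positivity) ((norm_nonneg _).trans key)

/-- The estimate on circles of radius `r < 1`, in the limit `r → 1`. -/
lemma norm_le_mul_pow_of_zeros (ρ M : ℝ) (hρ0 : 0 < ρ) (hρ1 : ρ < 1)
    (g : ℂ → ℂ) (hg : DifferentiableOn ℂ g (ball 0 1)) (hM : ∀ z ∈ ball (0 : ℂ) 1, ‖g z‖ ≤ M)
    (S : Finset ℂ) (hS : ∀ a ∈ S, ‖a‖ ≤ ρ ∧ g a = 0) : ‖g 0‖ ≤ M * ρ ^ S.card := by
  have hlim : Filter.Tendsto (fun r : ℝ => M * (ρ / r) ^ S.card) (nhdsWithin 1 (Set.Iio 1))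
      (nhds (M * (ρ / 1) ^ S.card)) := by
    apply Filter.Tendsto.mono_left _ nhdsWithin_le_nhds
    have : ContinuousAt (fun r : ℝ => M * (ρ / r) ^ S.card) 1 := by
      fun_prop (disch := norm_num)
    exact this
  rw [div_one] at hlim
  refine ge_of_tendsto hlim ?_
  filter_upwards [Ioo_mem_nhdsLT hρ1] with r hr
  refine norm_le_mul_pow_of_sphere r ρ M hr.2 hρ0 hr.1 S g hg ?_ hS
  intro z hz
  apply hM
  have : ‖z‖ = r := by simpa using hz
  rw [mem_ball_zero_iff, this]; exact hr.2

lemma norm_le_mul_rpow_of_numZeros (ρ M : ℝ) (hρ0 : 0 < ρ) (hρ1 : ρ < 1)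
    (g : ℂ → ℂ) (hg : DifferentiableOn ℂ g (ball 0 1)) (hM : ∀ z ∈ ball (0 : ℂ) 1, ‖g z‖ ≤ M)
    (T : ℝ) (hT : ENNReal.ofReal T ≤ numZeros g ρ) : ‖g 0‖ ≤ M * ρ ^ T := by
  have hM0 : 0 ≤ M := (norm_nonneg _).trans (hM 0 (by simp))
  set Z := {z : ℂ | z ∈ closedBall (0 : ℂ) ρ ∧ g z = 0} with hZ
  have hex : ∃ S : Finset ℂ, (S : Set ℂ) ⊆ Z ∧ T ≤ S.card := by
    by_cases hfin : Z.Finite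
    · refine ⟨hfin.toFinset, by simp, ?_⟩
      have h1 : ENNReal.ofReal T ≤ ((hfin.toFinset.card : ℕ) : ℝ≥0∞) := by
        have := hT
        rw [numZeros, ← hZ, hfin.encard_eq_coe_toFinset_card] at this
        simpa using this
      exact (ENNReal.ofReal_le_natCast).1 h1
    · obtain ⟨S, hS, hc⟩ := (show Z.Infinite from hfin).exists_subset_card_eq ⌈T⌉₊
      exact ⟨S, hS, hc ▸ Nat.le_ceil T⟩
  obtain ⟨S, hSZ, hTS⟩ := hex
  refine (norm_le_mul_pow_of_zeros ρ M hρ0 hρ1 g hg hM S ?_).trans ?_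
  · intro a ha
    have := hSZ ha
    exact ⟨by simpa using this.1, this.2⟩
  · rw [← Real.rpow_natCast]
    exact mul_le_mul_of_nonneg_left
      (Real.rpow_le_rpow_of_exponent_ge hρ0 hρ1.le hTS) hM0

/-- A convex set agrees, up to a null set for the Hausdorff measure of its own dimension, with a
Borel subset, namely its relative interior. -/
lemma exists_measurable_subset_of_convex {E : Type*} [NormedAddCommGroup E] [NormedSpace ℝ E]
    [MeasurableSpace E] [BorelSpace E] [FiniteDimensional ℝ E] (V : Set E) (hV : Convex ℝ V)
    (k : ℕ) (hk : Module.finrank ℝ ↥(vectorSpan ℝ V) = k) :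
    ∃ W ⊆ V, MeasurableSet W ∧ μH[k] (V \ W) = 0 := by
  rcases V.eq_empty_or_nonempty with rfl | ⟨v₀, hv₀⟩
  · exact ⟨∅, subset_rfl, MeasurableSet.empty, by simp⟩
  let i : ↥(vectorSpan ℝ V) → E := fun w => (w : E) + v₀
  have hi : Isometry i := by
    refine Isometry.of_dist_eq fun x y => ?_
    simp [i, Subtype.dist_eq]
  have hic : Topology.IsClosedEmbedding i := hi.isClosedEmbedding
  set V' : Set ↥(vectorSpan ℝ V) := i ⁻¹' V with hV'
  have hVi : i '' V' = V := by
    rw [hV', Set.image_preimage_eq_iff]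
    intro v hv
    exact ⟨⟨v - v₀, by simpa using vsub_mem_vectorSpan ℝ hv hv₀⟩, by simp [i]⟩
  have hconv : Convex ℝ V' := by
    have : V' = (vectorSpan ℝ V).subtype ⁻¹' ((fun x => x + v₀) ⁻¹' V) := rfl
    rw [this]
    exact (hV.translate_preimage_left v₀).linear_preimage _
  refine ⟨i '' interior V', ?_, ?_, ?_⟩
  · exact (Set.image_mono interior_subset).trans hVi.subset
  · exact hic.measurableEmbedding.measurableSet_image.2 isOpen_interior.measurableSet
  · have e : V \ i '' interior V' = i '' (V' \ interior V') := by
      rw [Set.image_sdiff hi.injective, hVi]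
    rw [e, hi.hausdorffMeasure_image (Or.inl (Nat.cast_nonneg k)), ← hk]
    refine measure_mono_null ?_ (hconv.addHaar_frontier μH[Module.finrank ℝ ↥(vectorSpan ℝ V)])
    exact Set.sdiff_subset_sdiff_left subset_closure

/-- distributional inequality for the number of zeros of a holomorphic
family over a convex set `V` of real dimension `k`, in terms of a Chebyshev-degree-type
constant `D` for `f₀(v) := f_v(0)`. -/
theorem statement5 (s : ℕ) (hs : 1 ≤ s) (R ρ : ℝ) (hR : 1 < R) (hρ0 : 0 < ρ)
    (hρ1 : ρ < 1) (f : EuclideanSpace ℂ (Fin s) → ℂ → ℂ)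
    (hf : DifferentiableOn ℂ (fun p : EuclideanSpace ℂ (Fin s) × ℂ => f p.1 p.2)
      (ball (0 : EuclideanSpace ℂ (Fin s)) R ×ˢ ball (0 : ℂ) 1))
    (V : Set (EuclideanSpace ℂ (Fin s))) (hV : Convex ℝ V)
    (hVb : Bornology.IsBounded V) (hV1 : V ⊆ ball 0 1)
    (k : ℕ) (hk : Module.finrank ℝ ↥(vectorSpan ℝ V) = k)
    (hV0 : 0 < μH[k] V) (hVfin : μH[k] V < ⊤)
    (M₁ M₂ : ℝ) (hM₁ : ∀ v ∈ V, ∀ z ∈ ball (0 : ℂ) 1, ‖f v z‖ ≤ M₁)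
    (hM₂pos : 0 < M₂) (hM₂ : M₂ ≤ sSup ((fun v => ‖f v 0‖) '' V))
    (D : ℝ) (hD : 0 < D)
    -- the defining (Remez-type) property of the Chebyshev degree of `f₀`:
    (hCheb : ∀ ω ⊆ V, MeasurableSet ω → 0 < μH[k] ω →
      sSup ((fun v => ‖f v 0‖) '' V)
        ≤ (4 * k * (μH[k] V).toReal / (μH[k] ω).toReal) ^ D *
            sSup ((fun v => ‖f v 0‖) '' ω)) :
    ∀ T : ℝ, 0 ≤ T →
      μH[k] {v ∈ V | ENNReal.ofReal T ≤ numZeros (f v) ρ}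
        ≤ ENNReal.ofReal (4 * k * (M₁ / M₂) ^ (1 / D) *
            Real.exp (-(Real.log (1 / ρ) / D) * T)) * μH[k] V := by
  intro T _
  obtain ⟨W, hWV, hWm, hWnull⟩ := exists_measurable_subset_of_convex V hV k hk
  have hVne : V.Nonempty := nonempty_of_measure_ne_zero hV0.ne'
  have hVR : V ⊆ ball 0 R := hV1.trans (ball_subset_ball hR.le)
  have hM₁pos : 0 < M₁ := by
    refine (hM₂pos.trans_le hM₂).trans_le (csSup_le (hVne.image _) ?_)
    rintro _ ⟨v, hv, rfl⟩
    exact hM₁ v hv 0 (by simp)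
  set c : ℝ := M₁ * ρ ^ T with hc
  have hcpos : 0 < c := mul_pos hM₁pos (Real.rpow_pos_of_pos hρ0 T)
  have hcont : ContinuousOn (fun v => ‖f v 0‖) (ball (0 : EuclideanSpace ℂ (Fin s)) R) := by
    refine ContinuousOn.norm (hf.continuousOn.comp (f := fun v => (v, (0 : ℂ))) (by fun_prop) ?_)
    intro v hv
    exact ⟨hv, by simp⟩
  -- the Borel sublevel set to which the Remez-type inequality applies
  set ω : Set (EuclideanSpace ℂ (Fin s)) := W ∩ (ball 0 R ∩ (fun v => ‖f v 0‖) ⁻¹' Set.Iic c) with hω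
  have hωV : ω ⊆ V := Set.inter_subset_left.trans hWV
  have hωm : MeasurableSet ω := by
    obtain ⟨u, hu, hu'⟩ := (continuousOn_iff_isClosed.1 hcont) (Set.Iic c) isClosed_Iic
    rw [hω, Set.inter_comm (ball _ _), hu']
    exact hWm.inter (hu.measurableSet.inter isOpen_ball.measurableSet)
  have hsub : {v ∈ V | ENNReal.ofReal T ≤ numZeros (f v) ρ} ⊆ ω ∪ (V \ W) := by
    rintro v ⟨hv, hvT⟩
    by_cases hvW : v ∈ W
    · refine Or.inl ⟨hvW, hVR hv, ?_⟩
      have hd : DifferentiableOn ℂ (f v) (ball 0 1) :=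
        hf.comp (f := fun z => (v, z)) (by fun_prop) (fun z hz => ⟨hVR hv, hz⟩)
      exact norm_le_mul_rpow_of_numZeros ρ M₁ hρ0 hρ1 (f v) hd (hM₁ v hv) T hvT
    · exact Or.inr ⟨hv, hvW⟩
  have hle : μH[k] {v ∈ V | ENNReal.ofReal T ≤ numZeros (f v) ρ} ≤ μH[k] ω := by
    refine (measure_mono hsub).trans ((measure_union_le _ _).trans ?_)
    rw [hWnull, add_zero]
  refine hle.trans ?_
  rcases eq_or_ne (μH[k] ω) 0 with h0 | h0
  · rw [h0]; exact zero_le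
  have hωfin : μH[k] ω ≠ ⊤ := ((measure_mono hωV).trans_lt hVfin).ne
  have hCh := hCheb ω hωV hωm (pos_iff_ne_zero.2 h0)
  set m : ℝ := (μH[k] ω).toReal with hm
  set n : ℝ := (μH[k] V).toReal with hn
  have hmpos : 0 < m := ENNReal.toReal_pos h0 hωfin
  have hn0 : 0 ≤ n := ENNReal.toReal_nonneg
  have hsup : sSup ((fun v => ‖f v 0‖) '' ω) ≤ c := by
    refine csSup_le ((nonempty_of_measure_ne_zero h0).image _) ?_
    rintro _ ⟨v, hv, rfl⟩
    exact hv.2.2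
  have hA : 0 ≤ 4 * k * n / m := by positivity
  have h1 : M₂ ≤ (4 * k * n / m) ^ D * c :=
    (hM₂.trans hCh).trans (mul_le_mul_of_nonneg_left hsup (Real.rpow_nonneg hA D))
  have h2 : (M₂ / c) ^ (1 / D) ≤ 4 * k * n / m := by
    have := Real.rpow_le_rpow (by positivity) ((div_le_iff₀ hcpos).2 h1)
      (one_div_pos.2 hD).le
    rwa [← Real.rpow_mul hA, mul_one_div_cancel hD.ne', Real.rpow_one] at this
  have h3 : (M₂ / c) ^ (1 / D) * (c / M₂) ^ (1 / D) = 1 := by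
    rw [← Real.mul_rpow (by positivity) (by positivity)]
    have : M₂ / c * (c / M₂) = 1 := by field_simp
    rw [this, Real.one_rpow]
  have h4 : (c / M₂) ^ (1 / D)
      = (M₁ / M₂) ^ (1 / D) * Real.exp (-(Real.log (1 / ρ) / D) * T) := by
    have e : c / M₂ = M₁ / M₂ * ρ ^ T := by rw [hc]; ring
    rw [e, Real.mul_rpow (by positivity) (by positivity), Real.rpow_def_of_pos hρ0 T,
      ← Real.exp_mul, one_div ρ, Real.log_inv]
    congr 2
    ring
  have h5 : m ≤ 4 * k * (M₁ / M₂) ^ (1 / D) * Real.exp (-(Real.log (1 / ρ) / D) * T) * n := by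
    have hq : 0 ≤ (c / M₂) ^ (1 / D) := by positivity
    have h6 := mul_le_mul_of_nonneg_right h2 hq
    rw [h3, div_mul_eq_mul_div, one_le_div hmpos, h4] at h6
    linarith
  rw [← ENNReal.ofReal_toReal hωfin, ← ENNReal.ofReal_toReal hVfin.ne,
    ← ENNReal.ofReal_mul (by positivity)]
  exact ENNReal.ofReal_le_ofReal h5
end
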